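/- arXiv:2508.09794 — 2 statements merged into one kernel-verified Lean document; each statement's English description precedes it below -/
import Mathlib

section
/- Let (R, ν) be a normalized BV₀ pair on (−1,1) of class BV₊ on (−1,1). Then: (a) for every f ∈ D_{R,ν}, the transform T_{R,ν}f extends to a continuous function on [−1,1]; and (b) for every continuous function g : [−1,1] → ℝ there exists exactly one f ∈ D_{R,ν} such that T_{R,ν}f(t) = g(t) for all t ∈ (−1,1). -/
/-!
By reflection it is enough to work on `[0, 1)`, where `dR = -t dν`. Put `w(s) = 1 / (R(s) R(s⁻))`.
The rules for the Stieltjes differential of a reciprocal and of a product, with left limits at the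
atoms of `ν`, give
`d(1/R) = s w dν`, `d(R⁻¹ ∫ f dν) = (T f) w dν` and `d(R ∫ g w dν) = (g / R - s ∫ g w dν) dν`.
The second formula shows that `T f = g` forces `f = g / R - t ∫ g w dν`, the third that this `f`
solves `T f = g` and has `∫ f dν = R ∫ g w dν`.

Both `T f` and the solution are, up to a continuous function, integrals
`∫_{(0,t]} (p(t) q(s) - q(t) p(s)) v(s) dν(s)`, whose integrand vanishes at `s = t`; hence they are
continuous although `R` may jump.

The boundary limits of the solution exist once `R ∫ g w dν` has a limit at `1`. If `R(1⁻) > 0`, then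
`w` is integrable up to `1`. If `R(1⁻) = 0`, then `1/R = 1/R(0) + ∫ s w dν` tends to infinity and
`R ∫ g w dν` tends to `g(1)` by L'Hôpital's rule.
-/

open MeasureTheory Set Filter Function Topology

/-- A normalized BV₀ pair on `(-1,1)`: a signed Borel measure, represented by its
mutually singular positive part `νp` and negative part `νm`, that is finite on compact
subsets of `(-1,1)`, gives no mass to `{0}` and lives on `(-1,1)`, together with a
function `R` satisfying the fundamental-theorem-of-calculus relations. -/
structure NormBV0 where
  R : ℝ → ℝ
  νp : Measure ℝ
  νm : Measure ℝ
  sing : νp.MutuallySingular νm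
  supp_p : νp (Set.Ioo (-1 : ℝ) 1)ᶜ = 0
  supp_m : νm (Set.Ioo (-1 : ℝ) 1)ᶜ = 0
  locfin_p : ∀ K : Set ℝ, IsCompact K → K ⊆ Set.Ioo (-1 : ℝ) 1 → νp K ≠ ⊤
  locfin_m : ∀ K : Set ℝ, IsCompact K → K ⊆ Set.Ioo (-1 : ℝ) 1 → νm K ≠ ⊤
  zero_p : νp {0} = 0
  zero_m : νm {0} = 0
  fund_pos : ∀ t ∈ Set.Ico (0 : ℝ) 1,
    R t = R 0 - ((∫ s in Set.Ioc (0 : ℝ) t, s ∂νp) - (∫ s in Set.Ioc (0 : ℝ) t, s ∂νm))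
  fund_neg : ∀ t ∈ Set.Ioc (-1 : ℝ) 0,
    R t = R 0 + ((∫ s in Set.Ico t (0 : ℝ), s ∂νp) - (∫ s in Set.Ico t (0 : ℝ), s ∂νm))

/-- The integral of `f` over `S` with respect to the signed measure `νp - νm`. -/
noncomputable def NormBV0.integ (P : NormBV0) (S : Set ℝ) (f : ℝ → ℝ) : ℝ :=
  (∫ s in S, f s ∂P.νp) - (∫ s in S, f s ∂P.νm)

/-- The transform `T_{R,ν} f`. -/
noncomputable def NormBV0.T (P : NormBV0) (f : ℝ → ℝ) (t : ℝ) : ℝ :=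
  if 0 < t then P.R t * f t + t * P.integ (Set.Ioc 0 t) f
  else P.R t * f t - t * P.integ (Set.Ico t 0) f

/-- The pair `(R,ν)` is of class `BV₊` on `(-1,1)`: `|ν|((-1,1)) < ∞`, `R > 0` on
`(-1,1)`, and `ν` or `-ν` is nonnegative. -/
def NormBV0.BVplus (P : NormBV0) : Prop :=
  P.νp (Set.Ioo (-1 : ℝ) 1) ≠ ⊤ ∧ P.νm (Set.Ioo (-1 : ℝ) 1) ≠ ⊤ ∧
  (∀ t ∈ Set.Ioo (-1 : ℝ) 1, 0 < P.R t) ∧ (P.νm = 0 ∨ P.νp = 0)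

/-- The class `D_{R,ν}` of continuous functions on `(-1,1)` whose four boundary limits
exist. -/
def NormBV0.memD (P : NormBV0) (f : ℝ → ℝ) : Prop :=
  ContinuousOn f (Set.Ioo (-1 : ℝ) 1) ∧
  (∃ L : ℝ, Tendsto (fun t => P.R t * f t) (𝓝[<] (1 : ℝ)) (𝓝 L)) ∧
  (∃ L : ℝ, Tendsto (fun t => P.R t * f t) (𝓝[>] (-1 : ℝ)) (𝓝 L)) ∧
  (∃ L : ℝ, Tendsto (fun t => P.integ (Set.Ioc 0 t) f) (𝓝[<] (1 : ℝ)) (𝓝 L)) ∧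
  (∃ L : ℝ, Tendsto (fun t => P.integ (Set.Ico t 0) f) (𝓝[>] (-1 : ℝ)) (𝓝 L))

section UniformSubdivision

variable {a b s : ℝ} {n i : ℕ}

/-- The `i`-th node of the uniform subdivision of `[a, b]` into `n` intervals. -/
noncomputable def uniformNode (a b : ℝ) (n i : ℕ) : ℝ := a + (b - a) / n * i

/-- The index `i` of the interval `(uniformNode a b n i, uniformNode a b n (i + 1)]` containing
`s`. -/
noncomputable def uniformIndex (a b : ℝ) (n : ℕ) (s : ℝ) : ℕ := ⌈(s - a) / ((b - a) / n)⌉₊ - 1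

theorem uniformNode_zero (a b : ℝ) (n : ℕ) : uniformNode a b n 0 = a := by
  simp [uniformNode]

theorem uniformNode_self (a b : ℝ) (hn : n ≠ 0) : uniformNode a b n n = b := by
  simp [uniformNode, hn]

theorem monotone_uniformNode (hab : a ≤ b) (n : ℕ) : Monotone (uniformNode a b n) := by
  intro i j hij
  have : 0 ≤ b - a := sub_nonneg.2 hab
  unfold uniformNode
  gcongr

theorem uniformNode_mem_Icc (hab : a ≤ b) (hn : n ≠ 0) (hi : i ≤ n) :
    uniformNode a b n i ∈ Icc a b :=
  ⟨(uniformNode_zero a b n).ge.trans (monotone_uniformNode hab n i.zero_le),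
    (monotone_uniformNode hab n hi).trans (uniformNode_self a b hn).le⟩

theorem mem_Ioc_uniformNode_iff (hab : a < b) (hn : n ≠ 0) :
    s ∈ Ioc (uniformNode a b n i) (uniformNode a b n (i + 1)) ↔
      ⌈(s - a) / ((b - a) / n)⌉₊ = i + 1 := by
  have hw : 0 < (b - a) / n := div_pos (sub_pos.2 hab) (by positivity)
  rw [Nat.ceil_eq_iff i.succ_ne_zero, lt_div_iff₀ hw, div_le_iff₀ hw, lt_sub_iff_add_lt',
    sub_le_iff_le_add', mul_comm, mul_comm _ ((b - a) / n)]
  rfl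

theorem uniformIndex_eq (hab : a < b) (hn : n ≠ 0)
    (hs : s ∈ Ioc (uniformNode a b n i) (uniformNode a b n (i + 1))) :
    uniformIndex a b n s = i := by
  rw [uniformIndex, (mem_Ioc_uniformNode_iff hab hn).1 hs, Nat.add_sub_cancel]

theorem mem_Ioc_uniformNode_uniformIndex (hn : n ≠ 0) (hs : s ∈ Ioc a b) :
    s ∈ Ioc (uniformNode a b n (uniformIndex a b n s))
      (uniformNode a b n (uniformIndex a b n s + 1)) := by
  have hab : a < b := hs.1.trans_le hs.2
  have hceil : 0 < ⌈(s - a) / ((b - a) / n)⌉₊ :=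
    Nat.ceil_pos.2 (div_pos (sub_pos.2 hs.1) (div_pos (sub_pos.2 hab) (by positivity)))
  rw [mem_Ioc_uniformNode_iff hab hn, uniformIndex, Nat.sub_add_cancel hceil]

theorem uniformIndex_lt (hn : n ≠ 0) (hs : s ∈ Ioc a b) : uniformIndex a b n s < n := by
  by_contra! hle
  have hnode := monotone_uniformNode (hs.1.trans_le hs.2).le n hle
  rw [uniformNode_self a b hn] at hnode
  exact (hnode.trans_lt (mem_Ioc_uniformNode_uniformIndex hn hs).1).not_ge hs.2

theorem tendsto_uniformNode_uniformIndex (hs : s ∈ Ioc a b) :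
    Tendsto (fun n => (uniformNode a b n (uniformIndex a b n s),
      uniformNode a b n (uniformIndex a b n s + 1))) atTop (𝓝[Ico a s] s ×ˢ 𝓝[Icc s b] s) := by
  have hab : a ≤ b := (hs.1.trans_le hs.2).le
  have hwidth : Tendsto (fun n : ℕ => (b - a) / n) atTop (𝓝 0) :=
    tendsto_const_div_atTop_nhds_zero_nat _
  have hgap (n i : ℕ) : uniformNode a b n (i + 1) - uniformNode a b n i = (b - a) / n := by
    simp only [uniformNode, Nat.cast_add_one]
    ring
  have hne : ∀ᶠ n : ℕ in atTop, n ≠ 0 := eventually_ne_atTop 0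
  refine Tendsto.prodMk (tendsto_nhdsWithin_iff.2 ⟨?_, hne.mono fun n hn => ?_⟩)
    (tendsto_nhdsWithin_iff.2 ⟨?_, hne.mono fun n hn => ?_⟩)
  · refine tendsto_iff_dist_tendsto_zero.2 (squeeze_zero' (.of_forall fun _ => dist_nonneg)
      (hne.mono fun n hn => ?_) hwidth)
    have hmem := mem_Ioc_uniformNode_uniformIndex hn hs
    rw [dist_comm, Real.dist_eq, abs_of_pos (sub_pos.2 hmem.1), ← hgap n (uniformIndex a b n s)]
    exact sub_le_sub_right hmem.2 _
  · exact ⟨(uniformNode_mem_Icc hab hn (uniformIndex_lt hn hs).le).1,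
      (mem_Ioc_uniformNode_uniformIndex hn hs).1⟩
  · refine tendsto_iff_dist_tendsto_zero.2 (squeeze_zero' (.of_forall fun _ => dist_nonneg)
      (hne.mono fun n hn => ?_) hwidth)
    have hmem := mem_Ioc_uniformNode_uniformIndex hn hs
    rw [Real.dist_eq, abs_of_nonneg (sub_nonneg.2 hmem.2), ← hgap n (uniformIndex a b n s)]
    exact sub_le_sub_left hmem.1.le _
  · exact ⟨(mem_Ioc_uniformNode_uniformIndex hn hs).2,
      (uniformNode_mem_Icc hab hn (uniformIndex_lt hn hs)).2⟩

end UniformSubdivision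

section StieltjesKernel

variable {μ : Measure ℝ} {a b : ℝ} {k : ℝ → ℝ → ℝ → ℝ} {φ Φ : ℝ → ℝ}

/-- The function equal to `k x y` on each interval `(x, y]` of the uniform subdivision of `[a, b]`
into `n` intervals: the integrand of the `n`-th Riemann–Stieltjes sum. -/
noncomputable def stepKernel (k : ℝ → ℝ → ℝ → ℝ) (a b : ℝ) (n : ℕ) (s : ℝ) : ℝ :=
  k (uniformNode a b n (uniformIndex a b n s)) (uniformNode a b n (uniformIndex a b n s + 1)) s

/-- A family of integrands `k x y`, one for each interval `(x, y] ⊆ [a, b]`, that is dominated and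
converges pointwise to `φ` as the interval shrinks to a point `s`. Since `s ∈ (x, y]`, the limit is
taken as `x → s` from strictly below and `y → s` from above. -/
structure IsStieltjesKernel (k : ℝ → ℝ → ℝ → ℝ) (φ : ℝ → ℝ) (μ : Measure ℝ) (a b : ℝ) : Prop where
  integrableOn : ∀ x ∈ Icc a b, ∀ y ∈ Icc a b, IntegrableOn (k x y) (Ioc a b) μ
  exists_bound : ∃ C, IntegrableOn C (Ioc a b) μ ∧
    ∀ x ∈ Icc a b, ∀ y ∈ Icc a b, ∀ s ∈ Ioc a b, |k x y s| ≤ C s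
  tendsto : ∀ s ∈ Ioc a b,
    Tendsto (fun z : ℝ × ℝ => k z.1 z.2 s) (𝓝[<] s ×ˢ 𝓝[Icc s b] s) (𝓝 (φ s))

namespace IsStieltjesKernel

theorem mono_right {t : ℝ} (hk : IsStieltjesKernel k φ μ a b) (ht : t ≤ b) :
    IsStieltjesKernel k φ μ a t := by
  obtain ⟨C, hC, hkC⟩ := hk.exists_bound
  have hIcc : Icc a t ⊆ Icc a b := Icc_subset_Icc_right ht
  have hIoc : Ioc a t ⊆ Ioc a b := Ioc_subset_Ioc_right ht
  exact ⟨fun x hx y hy => (hk.integrableOn x (hIcc hx) y (hIcc hy)).mono_set hIoc,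
    ⟨C, hC.mono_set hIoc, fun x hx y hy s hs => hkC x (hIcc hx) y (hIcc hy) s (hIoc hs)⟩,
    fun s hs => (hk.tendsto s (hIoc hs)).mono_left
      (prod_mono le_rfl (nhdsWithin_mono _ (Icc_subset_Icc_right ht)))⟩

theorem eqOn_stepKernel (hab : a < b) {n : ℕ} (hn : n ≠ 0) (i : ℕ) :
    EqOn (stepKernel k a b n) (k (uniformNode a b n i) (uniformNode a b n (i + 1)))
      (uIoc (uniformNode a b n i) (uniformNode a b n (i + 1))) := by
  intro s hs
  rw [uIoc_of_le (monotone_uniformNode hab.le n i.le_succ)] at hs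
  rw [stepKernel, uniformIndex_eq hab hn hs]

theorem intervalIntegrable_stepKernel_piece (hk : IsStieltjesKernel k φ μ a b) (hab : a < b)
    {n i : ℕ} (hi : i < n) : IntervalIntegrable (stepKernel k a b n) μ
      (uniformNode a b n i) (uniformNode a b n (i + 1)) := by
  have hn : n ≠ 0 := Nat.ne_zero_of_lt hi
  have hx := uniformNode_mem_Icc hab.le hn hi.le
  have hy := uniformNode_mem_Icc hab.le hn hi
  refine IntervalIntegrable.congr (eqOn_stepKernel hab hn i).symm ?_
  rw [intervalIntegrable_iff_integrableOn_Ioc_of_le (monotone_uniformNode hab.le n i.le_succ)]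
  exact (hk.integrableOn _ hx _ hy).mono_set (Ioc_subset_Ioc hx.1 hy.2)

theorem aestronglyMeasurable_stepKernel (hk : IsStieltjesKernel k φ μ a b) (hab : a < b) {n : ℕ}
    (hn : n ≠ 0) : AEStronglyMeasurable (stepKernel k a b n) (μ.restrict (Ioc a b)) := by
  have hint := IntervalIntegrable.trans_iterate (a := uniformNode a b n)
    fun i (hi : i < n) => hk.intervalIntegrable_stepKernel_piece hab hi
  rw [uniformNode_zero, uniformNode_self a b hn,
    intervalIntegrable_iff_integrableOn_Ioc_of_le hab.le] at hint
  exact hint.aestronglyMeasurable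

theorem integral_stepKernel (hk : IsStieltjesKernel k φ μ a b) (hab : a < b)
    (hΦ : ∀ x ∈ Icc a b, ∀ y ∈ Icc x b, ∫ s in x..y, k x y s ∂μ = Φ y - Φ x)
    {n : ℕ} (hn : n ≠ 0) : ∫ s in a..b, stepKernel k a b n s ∂μ = Φ b - Φ a := by
  have hpiece (i : ℕ) (hi : i ∈ Finset.range n) :
      ∫ s in uniformNode a b n i..uniformNode a b n (i + 1), stepKernel k a b n s ∂μ =
        Φ (uniformNode a b n (i + 1)) - Φ (uniformNode a b n i) := by
    have hi := Finset.mem_range.1 hi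
    rw [intervalIntegral.integral_congr_ae (.of_forall (eqOn_stepKernel hab hn i))]
    exact hΦ _ (uniformNode_mem_Icc hab.le hn hi.le) _
      ⟨monotone_uniformNode hab.le n i.le_succ, (uniformNode_mem_Icc hab.le hn hi).2⟩
  have htelescope := Finset.sum_range_sub (fun i => Φ (uniformNode a b n i)) n
  rwa [← Finset.sum_congr rfl hpiece, intervalIntegral.sum_integral_adjacent_intervals
    (a := uniformNode a b n) fun i hi => hk.intervalIntegrable_stepKernel_piece hab hi,
    uniformNode_zero, uniformNode_self a b hn] at htelescope

theorem tendsto_stepKernel (hk : IsStieltjesKernel k φ μ a b) :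
    ∀ᵐ s ∂μ.restrict (Ioc a b), Tendsto (fun n => stepKernel k a b n s) atTop (𝓝 (φ s)) :=
  (ae_restrict_mem measurableSet_Ioc).mono fun s hs => ((hk.tendsto s hs).mono_left
    (prod_mono (nhdsWithin_mono _ Ico_subset_Iio_self) le_rfl)).comp
      (tendsto_uniformNode_uniformIndex hs)

theorem exists_bound_stepKernel (hk : IsStieltjesKernel k φ μ a b) :
    ∃ C, IntegrableOn C (Ioc a b) μ ∧
      ∀ n ≠ 0, ∀ᵐ s ∂μ.restrict (Ioc a b), |stepKernel k a b n s| ≤ C s := by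
  obtain ⟨C, hC, hkC⟩ := hk.exists_bound
  refine ⟨C, hC, fun n hn => (ae_restrict_mem measurableSet_Ioc).mono fun s hs => ?_⟩
  have hab := (hs.1.trans_le hs.2).le
  exact hkC _ (uniformNode_mem_Icc hab hn (uniformIndex_lt hn hs).le) _
    (uniformNode_mem_Icc hab hn (uniformIndex_lt hn hs)) s hs

theorem integrableOn_limit (hk : IsStieltjesKernel k φ μ a b) : IntegrableOn φ (Ioc a b) μ := by
  rcases le_or_gt b a with hba | hab
  · simp [Ioc_eq_empty_of_le hba]
  obtain ⟨C, hC, hbound⟩ := hk.exists_bound_stepKernel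
  have hlim := hk.tendsto_stepKernel.mono fun s hs => hs.comp (tendsto_add_atTop_nat 1)
  refine hC.mono' (aestronglyMeasurable_of_tendsto_ae atTop
    (fun n => hk.aestronglyMeasurable_stepKernel hab n.succ_ne_zero) hlim) ?_
  filter_upwards [hlim, ae_all_iff.2 fun n : ℕ => hbound (n + 1) n.succ_ne_zero] with s hs hsC
  exact le_of_tendsto' hs.abs hsC

theorem integral_limit (hk : IsStieltjesKernel k φ μ a b) (hab : a ≤ b)
    (hΦ : ∀ x ∈ Icc a b, ∀ y ∈ Icc x b, ∫ s in x..y, k x y s ∂μ = Φ y - Φ x) :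
    ∫ s in a..b, φ s ∂μ = Φ b - Φ a := by
  rcases hab.eq_or_lt with rfl | hab
  · simp
  obtain ⟨C, hC, hbound⟩ := hk.exists_bound_stepKernel
  have hne : ∀ᶠ n : ℕ in atTop, n ≠ 0 := eventually_ne_atTop 0
  rw [intervalIntegral.integral_of_le hab.le]
  refine tendsto_nhds_unique (tendsto_integral_filter_of_dominated_convergence C
    (hne.mono fun n hn => hk.aestronglyMeasurable_stepKernel hab hn)
    (hne.mono hbound) hC hk.tendsto_stepKernel) ?_
  refine tendsto_const_nhds.congr' (hne.mono fun n hn => ?_)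
  rw [← hk.integral_stepKernel hab hΦ hn, intervalIntegral.integral_of_le hab.le]

end IsStieltjesKernel

end StieltjesKernel

section HalfOpenInterval

variable {a b : ℝ} {f : ℝ → ℝ}

theorem continuousOn_Ico_of_forall_Icc (hf : ∀ c ∈ Ico a b, ContinuousOn f (Icc a c)) :
    ContinuousOn f (Ico a b) := by
  intro t ht
  obtain ⟨c, htc, hcb⟩ := exists_between ht.2
  refine (hf c ⟨ht.1.trans htc.le, hcb⟩ t ⟨ht.1, htc.le⟩).mono_of_mem_nhdsWithin ?_
  filter_upwards [self_mem_nhdsWithin, mem_nhdsWithin_of_mem_nhds (Iic_mem_nhds htc)] with s hs hsc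
  exact ⟨hs.1, hsc⟩

theorem tendsto_nhdsLT_of_continuousOn_Icc (hab : a < b) (hf : ContinuousOn f (Icc a b)) :
    Tendsto f (𝓝[<] b) (𝓝 (f b)) :=
  ((continuousWithinAt_Icc_iff_Iic hab).1 (hf b (right_mem_Icc.2 hab.le))).mono
    Iio_subset_Iic_self

end HalfOpenInterval

section IntervalIntegral

variable {μ : Measure ℝ} {a b : ℝ} {f : ℝ → ℝ}

theorem tendsto_intervalIntegral_nhdsLT (hab : a < b) (hf : IntegrableOn f (Ioo a b) μ) :
    Tendsto (fun t => ∫ s in a..t, f s ∂μ) (𝓝[<] b) (𝓝 (∫ s in Ioo a b, f s ∂μ)) := by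
  have hcover : AECover (μ.restrict (Ioo a b)) (𝓝[<] b) fun t => Ioc a t :=
    aecover_Ioo_of_Ioc tendsto_const_nhds (tendsto_id.mono_left nhdsWithin_le_nhds)
  refine (hcover.integral_tendsto_of_countably_generated hf).congr' ?_
  filter_upwards [Ioo_mem_nhdsLT hab] with t ht
  rw [intervalIntegral.integral_of_le ht.1.le, Measure.restrict_restrict measurableSet_Ioc,
    inter_eq_left.2 (Ioc_subset_Ioo_right ht.2)]

theorem continuousWithinAt_intervalIntegral_right {s : ℝ} (hf : IntegrableOn f (Ioc a b) μ)
    (hs : s ∈ Icc a b) : ContinuousWithinAt (fun t => ∫ x in a..t, f x ∂μ) (Icc s b) s := by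
  have hf' := (intervalIntegrable_iff_integrableOn_Ioc_of_le (hs.1.trans hs.2)).2 hf
  have hcut {t : ℝ} (ht : t ∈ Icc s b) :
      ∫ x in a..t, f x ∂μ = ∫ x in a..b, indicator {x | x ≤ t} f x ∂μ :=
    (intervalIntegral.integral_indicator ⟨hs.1.trans ht.1, ht.2⟩).symm
  refine ContinuousWithinAt.congr (intervalIntegral.continuousWithinAt_of_dominated_interval
    (bound := fun x => ‖f x‖) (.of_forall fun t => ?_) (.of_forall fun t => .of_forall fun x _ =>
      norm_indicator_le_norm_self _ _) hf'.norm (.of_forall fun x _ => ?_))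
    (fun t ht => hcut ht) (hcut (left_mem_Icc.2 hs.2))
  · exact (intervalIntegrable_iff.1 hf').aestronglyMeasurable.indicator measurableSet_Iic
  · rcases le_or_gt x s with hxs | hsx
    · refine (continuousWithinAt_const (b := f x)).congr_of_mem (fun t ht => ?_)
        (left_mem_Icc.2 hs.2)
      exact indicator_of_mem (s := {y | y ≤ t}) (hxs.trans ht.1) f
    · refine (continuousAt_const (y := (0 : ℝ))).congr ?_ |>.continuousWithinAt
      filter_upwards [Iio_mem_nhds hsx] with t ht
      exact (indicator_of_notMem (s := {y | y ≤ t}) (not_le.2 (mem_Iio.1 ht)) f).symm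

end IntervalIntegral

/-- `F` is a primitive on `[a, b]` of the density `f` with respect to `μ`, that is
`dF = f dμ` there. As `μ` may have atoms, `F` is only right-continuous, and jumps by `f s * μ {s}`
at `s`. -/
structure IsPrimitiveOn (F f : ℝ → ℝ) (μ : Measure ℝ) (a b : ℝ) : Prop where
  integrableOn : IntegrableOn f (Ioc a b) μ
  integral_eq_sub_left : ∀ t ∈ Icc a b, ∫ s in a..t, f s ∂μ = F t - F a

namespace IsPrimitiveOn

variable {μ : Measure ℝ} {a b x y s δ : ℝ} {F G f g : ℝ → ℝ}

theorem of_integral (hf : IntegrableOn f (Ioc a b) μ) (c : ℝ)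
    (hF : ∀ t ∈ Icc a b, F t = c + ∫ s in a..t, f s ∂μ) : IsPrimitiveOn F f μ a b where
  integrableOn := hf
  integral_eq_sub_left t ht := by
    rw [hF t ht, hF a (left_mem_Icc.2 (ht.1.trans ht.2)), intervalIntegral.integral_same]
    ring

theorem congr (hF : IsPrimitiveOn F f μ a b) (hfg : EqOn f g (Ioc a b)) :
    IsPrimitiveOn F g μ a b where
  integrableOn := hF.integrableOn.congr_fun hfg measurableSet_Ioc
  integral_eq_sub_left t ht := by
    rw [← hF.integral_eq_sub_left t ht, intervalIntegral.integral_of_le ht.1,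
      intervalIntegral.integral_of_le ht.1]
    exact (setIntegral_congr_fun measurableSet_Ioc
      (hfg.mono (Ioc_subset_Ioc_right ht.2))).symm

theorem intervalIntegrable (hF : IsPrimitiveOn F f μ a b) (hx : x ∈ Icc a b) (hy : y ∈ Icc a b) :
    IntervalIntegrable f μ x y :=
  intervalIntegrable_iff.2 (hF.integrableOn.mono_set
    (Ioc_subset_Ioc (le_min hx.1 hy.1) (max_le hx.2 hy.2)))

theorem integral_eq_sub (hF : IsPrimitiveOn F f μ a b) (hx : x ∈ Icc a b) (hy : y ∈ Icc a b) :
    ∫ s in x..y, f s ∂μ = F y - F x := by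
  have ha : a ∈ Icc a b := left_mem_Icc.2 (hx.1.trans hx.2)
  rw [← intervalIntegral.integral_interval_sub_left (hF.intervalIntegrable ha hy)
    (hF.intervalIntegrable ha hx), hF.integral_eq_sub_left y hy, hF.integral_eq_sub_left x hx]
  ring

theorem eq_add_integral (hF : IsPrimitiveOn F f μ a b) :
    EqOn F (fun t => F a + ∫ s in a..t, f s ∂μ) (Icc a b) := fun t ht => by
  simp only [hF.integral_eq_sub_left t ht, add_sub_cancel]

theorem exists_bound (hF : IsPrimitiveOn F f μ a b) : ∃ C, ∀ t ∈ Icc a b, |F t| ≤ C := by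
  refine ⟨|F a| + ∫ s in Ioc a b, |f s| ∂μ, fun t ht => ?_⟩
  rw [hF.eq_add_integral ht]
  refine (abs_add_le _ _).trans (add_le_add_right ?_ _)
  rw [intervalIntegral.integral_of_le ht.1]
  exact abs_integral_le_integral_abs.trans (setIntegral_mono_set hF.integrableOn.abs
    (.of_forall fun _ => abs_nonneg _) (Ioc_subset_Ioc_right ht.2).eventuallyLE)

theorem continuousWithinAt_right (hF : IsPrimitiveOn F f μ a b) (hs : s ∈ Icc a b) :
    ContinuousWithinAt F (Icc s b) s :=
  ((continuousWithinAt_intervalIntegral_right hF.integrableOn hs).const_add (F a)).congr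
    (fun _ ht => hF.eq_add_integral ⟨hs.1.trans ht.1, ht.2⟩) (hF.eq_add_integral hs)

theorem tendsto_leftLim (hF : IsPrimitiveOn F f μ a b) (hs : s ∈ Ioc a b) :
    Tendsto F (𝓝[<] s) (𝓝 (leftLim F s)) := by
  refine tendsto_leftLim_of_tendsto
    ⟨_, ((tendsto_intervalIntegral_nhdsLT hs.1 (hF.integrableOn.mono_set
      (Ioo_subset_Ioc_self.trans (Ioc_subset_Ioc_right hs.2)))).const_add (F a)).congr' ?_⟩
  filter_upwards [Ioo_mem_nhdsLT hs.1] with t ht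
  exact (hF.eq_add_integral ⟨ht.1.le, ht.2.le.trans hs.2⟩).symm

theorem of_isStieltjesKernel {k : ℝ → ℝ → ℝ → ℝ} (hk : IsStieltjesKernel k f μ a b)
    (hF : ∀ x ∈ Icc a b, ∀ y ∈ Icc x b, ∫ s in x..y, k x y s ∂μ = F y - F x) :
    IsPrimitiveOn F f μ a b where
  integrableOn := hk.integrableOn_limit
  integral_eq_sub_left _ ht := (hk.mono_right ht.2).integral_limit ht.1
    fun x hx y hy => hF x ⟨hx.1, hx.2.trans ht.2⟩ y ⟨hy.1, hy.2.trans ht.2⟩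

/-- The asymmetry between left limits and values accounts for the atoms of `μ`, at which both
factors may jump. -/
theorem mul (hF : IsPrimitiveOn F f μ a b) (hG : IsPrimitiveOn G g μ a b) :
    IsPrimitiveOn (fun t => F t * G t) (fun s => leftLim F s * g s + G s * f s) μ a b := by
  obtain ⟨C, hC⟩ := hF.exists_bound
  obtain ⟨D, hD⟩ := hG.exists_bound
  refine of_isStieltjesKernel (k := fun x y s => F x * g s + G y * f s)
    ⟨fun x _ y _ => (hG.integrableOn.const_mul _).add (hF.integrableOn.const_mul _),
      ⟨fun s => C * |g s| + D * |f s|,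
        (hG.integrableOn.abs.const_mul _).add (hF.integrableOn.abs.const_mul _),
        fun x hx y hy s _ => ?_⟩, fun s hs => ?_⟩ fun x hx y hy => ?_
  · refine (abs_add_le _ _).trans ?_
    rw [abs_mul, abs_mul]
    beta_reduce
    gcongr
    exacts [hC x hx, hD y hy]
  · exact (((hF.tendsto_leftLim hs).comp tendsto_fst).mul_const _).add
      (((hG.continuousWithinAt_right (Ioc_subset_Icc_self hs)).tendsto.comp
        tendsto_snd).mul_const _)
  · have hy : y ∈ Icc a b := ⟨hx.1.trans hy.1, hy.2⟩
    rw [intervalIntegral.integral_add ((hG.intervalIntegrable hx hy).const_mul _)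
      ((hF.intervalIntegrable hx hy).const_mul _), intervalIntegral.integral_const_mul,
      intervalIntegral.integral_const_mul, hF.integral_eq_sub hx hy, hG.integral_eq_sub hx hy]
    ring

theorem le_leftLim (hF : IsPrimitiveOn F f μ a b) (hδ : ∀ t ∈ Icc a b, δ ≤ F t)
    (hs : s ∈ Ioc a b) : δ ≤ leftLim F s := by
  refine ge_of_tendsto (hF.tendsto_leftLim hs) ?_
  filter_upwards [Ioo_mem_nhdsLT hs.1] with t ht using hδ t ⟨ht.1.le, ht.2.le.trans hs.2⟩

theorem isStieltjesKernel_inv (hF : IsPrimitiveOn F f μ a b) (hδ₀ : 0 < δ)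
    (hδ : ∀ t ∈ Icc a b, δ ≤ F t) (hg : IntegrableOn g (Ioc a b) μ) :
    IsStieltjesKernel (fun x y s => (F y * F x)⁻¹ * g s)
      (fun s => (F s * leftLim F s)⁻¹ * g s) μ a b := by
  have hpos : ∀ t ∈ Icc a b, 0 < F t := fun t ht => hδ₀.trans_le (hδ t ht)
  refine ⟨fun x _ y _ => hg.const_mul _, ⟨fun s => (δ * δ)⁻¹ * |g s|, hg.abs.const_mul _,
    fun x hx y hy s _ => ?_⟩, fun s hs => ?_⟩
  · rw [abs_mul, abs_inv, abs_mul, abs_of_pos (hpos x hx), abs_of_pos (hpos y hy)]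
    beta_reduce
    gcongr
    exacts [(hpos y hy).le, hδ y hy, hδ x hx]
  · have hs' := Ioc_subset_Icc_self hs
    exact ((((hF.continuousWithinAt_right hs').tendsto.comp tendsto_snd).mul
      ((hF.tendsto_leftLim hs).comp tendsto_fst)).inv₀
        (mul_pos (hpos s hs') (hδ₀.trans_le (hF.le_leftLim hδ hs))).ne').mul_const _

theorem inv (hF : IsPrimitiveOn F f μ a b) (hδ₀ : 0 < δ) (hδ : ∀ t ∈ Icc a b, δ ≤ F t) :
    IsPrimitiveOn (fun t => (F t)⁻¹) (fun s => (F s * leftLim F s)⁻¹ * -f s) μ a b := by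
  refine of_isStieltjesKernel (hF.isStieltjesKernel_inv hδ₀ hδ hF.integrableOn.neg)
    fun x hx y hy => ?_
  have hy : y ∈ Icc a b := ⟨hx.1.trans hy.1, hy.2⟩
  have hFx : F x ≠ 0 := (hδ₀.trans_le (hδ x hx)).ne'
  have hFy : F y ≠ 0 := (hδ₀.trans_le (hδ y hy)).ne'
  rw [intervalIntegral.integral_const_mul, intervalIntegral.integral_neg,
    hF.integral_eq_sub hx hy]
  field_simp
  ring

end IsPrimitiveOn

section KernelIntegral

variable {μ : Measure ℝ} {a b : ℝ}

/-- As `k` vanishes on the diagonal, moving the endpoint `t` across an atom of `μ` adds no jump. -/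
theorem continuousOn_integral_of_diag_eq_zero {k : ℝ → ℝ → ℝ} {v : ℝ → ℝ}
    (hk : ContinuousOn (uncurry k) (Icc a b ×ˢ Icc a b)) (hk₀ : ∀ s, k s s = 0)
    (hv : IntegrableOn v (Ioc a b) μ) :
    ContinuousOn (fun t => ∫ s in a..t, k t s * v s ∂μ) (Icc a b) := by
  obtain ⟨C, hC⟩ := (isCompact_Icc.prod isCompact_Icc).exists_bound_of_continuousOn hk
  have hmaps {s t : ℝ} (hs : s ∈ Icc a b) (ht : t ∈ Icc a b) :
      (max t s, s) ∈ Icc a b ×ˢ Icc a b :=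
    ⟨⟨hs.1.trans (le_max_right t s), max_le ht.2 hs.2⟩, hs⟩
  have hmax : EqOn (fun t => ∫ s in a..t, k t s * v s ∂μ)
      (fun t => ∫ s in Ioc a b, k (max t s) s * v s ∂μ) (Icc a b) := by
    intro t ht
    simp only [intervalIntegral.integral_of_le ht.1]
    rw [setIntegral_eq_of_subset_of_forall_sdiff_eq_zero measurableSet_Ioc
      (Ioc_subset_Ioc_right ht.2)]
    · exact setIntegral_congr_fun measurableSet_Ioc fun s hs => by simp only [max_eq_left hs.2]
    · intro s hs
      have hts : t ≤ s := le_of_lt (not_le.1 fun hst => hs.2 ⟨hs.1.1, hst⟩)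
      rw [max_eq_right hts, hk₀, zero_mul]
  have hmem := ae_restrict_mem (μ := μ) (measurableSet_Ioc (a := a) (b := b))
  refine ContinuousOn.congr (continuousOn_of_dominated (bound := fun s => C * |v s|)
    (fun t ht => ?_) (fun t ht => hmem.mono fun s hs => ?_) (hv.abs.const_mul C)
    (hmem.mono fun s hs => ?_)) hmax
  · have hcont : ContinuousOn (fun s => k (max t s) s) (Ioc a b) :=
      hk.comp (f := fun s => (max t s, s)) (by fun_prop)
        fun s hs => hmaps (Ioc_subset_Icc_self hs) ht
    exact (hcont.aestronglyMeasurable measurableSet_Ioc).mul hv.aestronglyMeasurable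
  · rw [norm_mul]
    exact mul_le_mul_of_nonneg_right (hC _ (hmaps (Ioc_subset_Icc_self hs) ht)) (norm_nonneg _)
  · exact (hk.comp (f := fun t => (max t s, s)) (by fun_prop)
      fun t ht => hmaps (Ioc_subset_Icc_self hs) ht).mul continuousOn_const

theorem continuousOn_mul_integral_sub_mul_integral {p q v : ℝ → ℝ}
    (hp : ContinuousOn p (Icc a b)) (hq : ContinuousOn q (Icc a b))
    (hv : IntegrableOn v (Ioc a b) μ) :
    ContinuousOn (fun t => p t * (∫ s in a..t, q s * v s ∂μ) - q t * ∫ s in a..t, p s * v s ∂μ)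
      (Icc a b) := by
  have hfst {u : ℝ → ℝ} (hu : ContinuousOn u (Icc a b)) :
      ContinuousOn (fun z : ℝ × ℝ => u z.1) (Icc a b ×ˢ Icc a b) :=
    hu.comp continuousOn_fst fun z hz => hz.1
  have hsnd {u : ℝ → ℝ} (hu : ContinuousOn u (Icc a b)) :
      ContinuousOn (fun z : ℝ × ℝ => u z.2) (Icc a b ×ˢ Icc a b) :=
    hu.comp continuousOn_snd fun z hz => hz.2
  have hint {u : ℝ → ℝ} (hu : ContinuousOn u (Icc a b)) {t : ℝ} (ht : t ∈ Icc a b) :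
      IntervalIntegrable (fun s => u s * v s) μ a t :=
    (intervalIntegrable_iff_integrableOn_Ioc_of_le ht.1).2
      ((IntegrableOn.continuousOn_mul_of_subset hu hv isCompact_Icc measurableSet_Ioc
        Ioc_subset_Icc_self).mono_set (Ioc_subset_Ioc_right ht.2))
  refine (continuousOn_integral_of_diag_eq_zero (k := fun t s => p t * q s - q t * p s)
    (((hfst hp).mul (hsnd hq)).sub ((hfst hq).mul (hsnd hp))) (fun s => by ring) hv).congr
      fun t ht => ?_
  simp only [sub_mul, mul_assoc]
  rw [intervalIntegral.integral_sub ((hint hq ht).const_mul _) ((hint hp ht).const_mul _),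
    intervalIntegral.integral_const_mul, intervalIntegral.integral_const_mul]

theorem norm_intervalIntegral_le_add_mul {f p : ℝ → ℝ} {c r t : ℝ} (har : a ≤ r) (hrt : r ≤ t)
    (hc : 0 ≤ c) (hf : IntegrableOn f (Ioc a t) μ) (hp : IntegrableOn p (Ioc a t) μ)
    (hp₀ : ∀ s ∈ Ioc a r, 0 ≤ p s) (hfp : ∀ s ∈ Ioc r t, ‖f s‖ ≤ c * p s) :
    ‖∫ s in a..t, f s ∂μ‖ ≤ ‖∫ s in a..r, f s ∂μ‖ + c * ∫ s in a..t, p s ∂μ := by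
  have hhead {u : ℝ → ℝ} (hu : IntegrableOn u (Ioc a t) μ) : IntervalIntegrable u μ a r :=
    (intervalIntegrable_iff_integrableOn_Ioc_of_le har).2
      (hu.mono_set (Ioc_subset_Ioc_right hrt))
  have htail {u : ℝ → ℝ} (hu : IntegrableOn u (Ioc a t) μ) : IntervalIntegrable u μ r t :=
    (intervalIntegrable_iff_integrableOn_Ioc_of_le hrt).2 (hu.mono_set (Ioc_subset_Ioc_left har))
  rw [← intervalIntegral.integral_add_adjacent_intervals (hhead hf) (htail hf),
    ← intervalIntegral.integral_add_adjacent_intervals (hhead hp) (htail hp), mul_add]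
  refine (norm_add_le _ _).trans (add_le_add_right ?_ _)
  have hhead₀ : 0 ≤ c * ∫ s in a..r, p s ∂μ := by
    rw [intervalIntegral.integral_of_le har]
    exact mul_nonneg hc (setIntegral_nonneg measurableSet_Ioc hp₀)
  refine le_add_of_nonneg_of_le hhead₀ ?_
  rw [← intervalIntegral.integral_const_mul]
  exact intervalIntegral.norm_integral_le_of_norm_le hrt (.of_forall hfp) ((htail hp).const_mul c)

open Asymptotics in
theorem isLittleO_intervalIntegral_of_tendsto_atTop {f p : ℝ → ℝ}
    (hf : ∀ t ∈ Ico a b, IntegrableOn f (Ioc a t) μ)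
    (hp : ∀ t ∈ Ico a b, IntegrableOn p (Ioc a t) μ) (hp₀ : ∀ s ∈ Ioo a b, 0 ≤ p s)
    (hfp : f =o[𝓝[<] b] p) (hP : Tendsto (fun t => ∫ s in a..t, p s ∂μ) (𝓝[<] b) atTop)
    (hab : a < b) :
    (fun t => ∫ s in a..t, f s ∂μ) =o[𝓝[<] b] fun t => ∫ s in a..t, p s ∂μ := by
  refine isLittleO_iff.2 fun c hc => ?_
  obtain ⟨q, hqb, hq⟩ := (mem_nhdsLT_iff_exists_Ioo_subset' hab).1
    (isLittleO_iff.1 hfp (half_pos hc))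
  obtain ⟨r, hr, hrb⟩ := exists_between (max_lt hqb hab)
  have har : a < r := (le_max_right q a).trans_lt hr
  filter_upwards [Ioo_mem_nhdsLT hrb,
    hP.eventually_ge_atTop ((c / 2)⁻¹ * ‖∫ s in a..r, f s ∂μ‖)] with t ht hPt
  have htb : t ∈ Ico a b := ⟨(har.trans ht.1).le, ht.2⟩
  have hle : ∀ s ∈ Ioc r t, ‖f s‖ ≤ c / 2 * p s := fun s hs => by
    have hsb : s < b := hs.2.trans_lt ht.2
    rw [← Real.norm_of_nonneg (hp₀ s ⟨har.trans hs.1, hsb⟩)]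
    exact hq ⟨((le_max_left q a).trans_lt hr).trans hs.1, hsb⟩
  calc ‖∫ s in a..t, f s ∂μ‖
      ≤ ‖∫ s in a..r, f s ∂μ‖ + c / 2 * ∫ s in a..t, p s ∂μ :=
        norm_intervalIntegral_le_add_mul har.le ht.1.le (half_pos hc).le (hf t htb) (hp t htb)
          (fun s hs => hp₀ s ⟨hs.1, hs.2.trans_lt hrb⟩) hle
    _ ≤ c / 2 * (∫ s in a..t, p s ∂μ) + c / 2 * ∫ s in a..t, p s ∂μ := by
        rw [inv_mul_le_iff₀ (half_pos hc)] at hPt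
        gcongr
    _ ≤ c * ‖∫ s in a..t, p s ∂μ‖ := by
        rw [← add_mul, add_halves]
        gcongr
        exact Real.le_norm_self _

end KernelIntegral

/-- The data of a class `BV₊` pair on the half interval `[0, 1)`: the signed measure is `ε • ν` with
`ν` a finite measure, and `c` is the value `R 0`. On `(-1, 0]` the reflection `t ↦ -t` gives another
such pair. -/
structure HalfPair where
  ν : Measure ℝ
  ε : ℝ
  c : ℝ
  finite : IsFiniteMeasure ν
  null_one : ν {1} = 0
  pos : ∀ t ∈ Ico (0 : ℝ) 1, 0 < c - ε * ∫ s in 0..t, s ∂ν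

namespace HalfPair

variable (H : HalfPair)

instance : IsFiniteMeasure H.ν := H.finite

/-- The coefficient `R(t) = R(0) - ∫_{(0,t]} s dν(s)`. At `t = 1` its value is the limit at `1⁻`. -/
noncomputable def R (t : ℝ) : ℝ := H.c - H.ε * ∫ s in 0..t, s ∂H.ν

/-- The integral of `f` over `(0, t]` with respect to the signed measure. -/
noncomputable def integ (f : ℝ → ℝ) (t : ℝ) : ℝ := H.ε * ∫ s in 0..t, f s ∂H.ν

/-- The transform `T_{R,ν} f` on `[0, 1)`. -/
noncomputable def T (f : ℝ → ℝ) (t : ℝ) : ℝ := H.R t * f t + t * H.integ f t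

/-- The density `1 / (R(s) R(s⁻))`, for which `d(1/R) = s * weight s dν`. -/
noncomputable def weight (s : ℝ) : ℝ := (H.R s * leftLim H.R s)⁻¹

/-- The inverse of the transform `H.T`. -/
noncomputable def inv (g : ℝ → ℝ) (t : ℝ) : ℝ :=
  g t * (H.R t)⁻¹ - t * H.integ (fun s => g s * H.weight s) t

/-- The class `D_{R,ν}` on `[0, 1)`. -/
def memD (f : ℝ → ℝ) : Prop :=
  ContinuousOn f (Ico 0 1) ∧
  (∃ L : ℝ, Tendsto (fun t => H.R t * f t) (𝓝[<] 1) (𝓝 L)) ∧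
  ∃ L : ℝ, Tendsto (H.integ f) (𝓝[<] 1) (𝓝 L)

variable {H} {b t : ℝ} {f g : ℝ → ℝ}

theorem R_pos (ht : t ∈ Ico (0 : ℝ) 1) : 0 < H.R t := H.pos t ht

theorem R_zero : H.R 0 = H.c := by simp [R]

theorem integrableOn_of_continuousOn (hf : ContinuousOn f (Icc 0 b)) :
    IntegrableOn f (Ioc 0 b) H.ν :=
  hf.integrableOn_Icc.mono_set Ioc_subset_Icc_self

theorem integ_zero : H.integ f 0 = 0 := by simp [integ]

theorem isPrimitiveOn_integ (hf : IntegrableOn f (Ioc 0 b) H.ν) :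
    IsPrimitiveOn (H.integ f) (fun s => H.ε * f s) H.ν 0 b :=
  .of_integral (hf.const_mul _) 0 fun t _ => by
    rw [integ, intervalIntegral.integral_const_mul, zero_add]

theorem isPrimitiveOn_R (H : HalfPair) (b : ℝ) :
    IsPrimitiveOn H.R (fun s => -(H.ε * s)) H.ν 0 b :=
  .of_integral ((integrableOn_of_continuousOn continuousOn_id).const_mul _).neg H.c fun t _ => by
    rw [R, intervalIntegral.integral_neg, intervalIntegral.integral_const_mul, sub_eq_add_neg]

theorem monotoneOn_integral_id (H : HalfPair) :
    MonotoneOn (fun t => ∫ s in 0..t, s ∂H.ν) (Ici 0) := by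
  intro x hx y hy hxy
  simp only [intervalIntegral.integral_of_le hx.out, intervalIntegral.integral_of_le hy.out]
  exact setIntegral_mono_set (integrableOn_of_continuousOn continuousOn_id)
    ((ae_restrict_mem measurableSet_Ioc).mono fun s hs => hs.1.le)
    (Ioc_subset_Ioc_right hxy).eventuallyLE

theorem min_le_R (ht : t ∈ Icc 0 b) : min H.c (H.R b) ≤ H.R t := by
  have hmono := H.monotoneOn_integral_id
  have h0t := hmono (mem_Ici.2 le_rfl) ht.1 ht.1
  have htb := hmono ht.1 (ht.1.trans ht.2 : (0 : ℝ) ≤ b) ht.2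
  simp only [intervalIntegral.integral_same] at h0t
  rcases le_total 0 H.ε with hε | hε
  · refine (min_le_right _ _).trans ?_
    unfold R
    gcongr
  · refine (min_le_left _ _).trans ?_
    have := mul_nonpos_of_nonpos_of_nonneg hε h0t
    unfold R
    linarith

theorem c_pos (H : HalfPair) : 0 < H.c := by
  simpa only [R_zero] using H.R_pos (t := 0) (by simp)

section Weight

variable (hb : 0 < H.R b)
include hb

theorem min_c_R_pos : 0 < min H.c (H.R b) := lt_min H.c_pos hb

theorem R_pos_of_mem_Icc (ht : t ∈ Icc 0 b) : 0 < H.R t :=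
  (min_c_R_pos hb).trans_le (min_le_R ht)

theorem leftLim_R_pos (ht : t ∈ Ioc 0 b) : 0 < leftLim H.R t :=
  (min_c_R_pos hb).trans_le ((H.isPrimitiveOn_R b).le_leftLim (fun _ => min_le_R) ht)

theorem weight_pos (ht : t ∈ Ioc 0 b) : 0 < H.weight t :=
  inv_pos.2 (mul_pos (R_pos_of_mem_Icc hb (Ioc_subset_Icc_self ht)) (leftLim_R_pos hb ht))

theorem leftLim_R_mul_weight (ht : t ∈ Ioc 0 b) : leftLim H.R t * H.weight t = (H.R t)⁻¹ := by
  rw [weight, mul_inv, mul_left_comm, mul_inv_cancel₀ (leftLim_R_pos hb ht).ne', mul_one]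

theorem leftLim_inv_R (ht : t ∈ Ioc 0 b) :
    leftLim (fun s => (H.R s)⁻¹) t = H.R t * H.weight t := by
  have hR := (R_pos_of_mem_Icc hb (Ioc_subset_Icc_self ht)).ne'
  rw [weight, mul_inv, mul_inv_cancel_left₀ hR]
  exact leftLim_eq_of_tendsto
    (((H.isPrimitiveOn_R b).tendsto_leftLim ht).inv₀ (leftLim_R_pos hb ht).ne')

theorem integrableOn_mul_weight (hg : ContinuousOn g (Icc 0 b)) :
    IntegrableOn (fun s => g s * H.weight s) (Ioc 0 b) H.ν := by
  simpa only [mul_comm, weight] using ((H.isPrimitiveOn_R b).isStieltjesKernel_inv (min_c_R_pos hb)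
    (fun _ => min_le_R) (integrableOn_of_continuousOn hg)).integrableOn_limit

theorem isPrimitiveOn_inv_R :
    IsPrimitiveOn (fun t => (H.R t)⁻¹) (fun s => H.ε * (s * H.weight s)) H.ν 0 b :=
  ((H.isPrimitiveOn_R b).inv (min_c_R_pos hb) fun _ => min_le_R).congr fun s _ => by
    rw [weight]
    ring

theorem isPrimitiveOn_inv_R_mul_integ (hf : ContinuousOn f (Icc 0 b)) :
    IsPrimitiveOn (fun t => (H.R t)⁻¹ * H.integ f t) (fun s => H.ε * (H.T f s * H.weight s))
      H.ν 0 b :=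
  ((isPrimitiveOn_inv_R hb).mul (isPrimitiveOn_integ (integrableOn_of_continuousOn hf))).congr
    fun s hs => by
      simp only [leftLim_inv_R hb hs, T]
      ring

theorem isPrimitiveOn_R_mul_integ (hg : ContinuousOn g (Icc 0 b)) :
    IsPrimitiveOn (fun t => H.R t * H.integ (fun s => g s * H.weight s) t)
      (fun s => H.ε * H.inv g s) H.ν 0 b :=
  ((H.isPrimitiveOn_R b).mul (isPrimitiveOn_integ (integrableOn_mul_weight hb hg))).congr
    fun s hs => by
      simp only [inv, ← leftLim_R_mul_weight hb hs]
      ring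

end Weight

theorem continuousOn_T (hf : ContinuousOn f (Ico 0 1)) : ContinuousOn (H.T f) (Ico 0 1) := by
  refine continuousOn_Ico_of_forall_Icc fun b hb => ?_
  have hf : ContinuousOn f (Icc 0 b) := hf.mono (Icc_subset_Ico_right hb.2)
  refine ((hf.const_mul H.c).add ((continuousOn_mul_integral_sub_mul_integral continuousOn_id hf
    (v := 1) (integrableOn_of_continuousOn (H := H) continuousOn_const)).const_mul H.ε)).congr
      fun t _ => ?_
  simp only [T, R, integ, id_eq, Pi.add_apply, Pi.one_apply, mul_one]
  ring

theorem inv_R_eq (ht : t ∈ Ico (0 : ℝ) 1) :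
    (H.R t)⁻¹ = H.c⁻¹ + H.integ (fun s => s * H.weight s) t := by
  have h := (isPrimitiveOn_inv_R (H.R_pos ht)).eq_add_integral (right_mem_Icc.2 ht.1)
  simp only [R_zero, intervalIntegral.integral_const_mul] at h
  exact h

theorem continuousOn_inv (hg : ContinuousOn g (Ico 0 1)) : ContinuousOn (H.inv g) (Ico 0 1) := by
  refine continuousOn_Ico_of_forall_Icc fun b hb => ?_
  have hg : ContinuousOn g (Icc 0 b) := hg.mono (Icc_subset_Ico_right hb.2)
  have hweight : IntegrableOn H.weight (Ioc 0 b) H.ν := by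
    simpa only [one_mul] using integrableOn_mul_weight (H.R_pos hb) (continuousOn_const (c := 1))
  refine ((hg.const_mul H.c⁻¹).add ((continuousOn_mul_integral_sub_mul_integral hg continuousOn_id
    hweight).const_mul H.ε)).congr fun t ht => ?_
  simp only [inv, inv_R_eq ⟨ht.1, ht.2.trans_lt hb.2⟩, integ, id_eq, Pi.add_apply]
  ring

theorem inv_T (hf : ContinuousOn f (Ico 0 1)) : EqOn (H.inv (H.T f)) f (Ico 0 1) := by
  intro t ht
  have hR := H.R_pos ht
  have h := (isPrimitiveOn_inv_R_mul_integ hR (hf.mono (Icc_subset_Ico_right ht.2))).integral_eq_sub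
    (left_mem_Icc.2 ht.1) (right_mem_Icc.2 ht.1)
  rw [intervalIntegral.integral_const_mul, integ_zero, mul_zero, sub_zero] at h
  rw [inv, integ, h, T]
  field_simp
  ring

theorem integ_inv (hb : 0 < H.R t) (ht : 0 ≤ t) (hg : ContinuousOn g (Icc 0 t)) :
    H.integ (H.inv g) t = H.R t * H.integ (fun s => g s * H.weight s) t := by
  have h := (isPrimitiveOn_R_mul_integ hb hg).integral_eq_sub (left_mem_Icc.2 ht)
    (right_mem_Icc.2 ht)
  rwa [intervalIntegral.integral_const_mul, integ_zero, mul_zero, sub_zero] at h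

theorem T_inv (hg : ContinuousOn g (Ico 0 1)) : EqOn (H.T (H.inv g)) g (Ico 0 1) := by
  intro t ht
  have hR := H.R_pos ht
  rw [T, integ_inv hR ht.1 (hg.mono (Icc_subset_Ico_right ht.2)), inv]
  field_simp
  ring

theorem tendsto_R (H : HalfPair) : Tendsto H.R (𝓝[<] 1) (𝓝 (H.R 1)) := by
  have h := tendsto_intervalIntegral_nhdsLT zero_lt_one ((integrableOn_of_continuousOn (H := H)
    continuousOn_id).mono_set Ioo_subset_Ioc_self)
  rw [← integral_Ioc_eq_integral_Ioo' H.null_one,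
    ← intervalIntegral.integral_of_le zero_le_one] at h
  exact (h.const_mul H.ε).const_sub H.c

theorem R_one_nonneg (H : HalfPair) : 0 ≤ H.R 1 :=
  ge_of_tendsto H.tendsto_R <| by
    filter_upwards [Ico_mem_nhdsLT zero_lt_one] with t ht using (H.R_pos ht).le

section Degenerate

variable (h₁ : H.R 1 = 0)
include h₁

theorem ε_pos_of_R_one_eq_zero : 0 < H.ε := by
  have hint : 0 ≤ ∫ s in (0 : ℝ)..1, s ∂H.ν :=
    intervalIntegral.integral_nonneg zero_le_one fun s hs => hs.1
  refine pos_of_mul_pos_left ?_ hint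
  rw [← sub_eq_zero.1 h₁]
  exact H.c_pos

theorem tendsto_integral_id_mul_weight_atTop :
    Tendsto (fun t => ∫ s in 0..t, s * H.weight s ∂H.ν) (𝓝[<] 1) atTop := by
  have hR : Tendsto H.R (𝓝[<] 1) (𝓝[>] 0) := tendsto_nhdsWithin_iff.2 ⟨h₁ ▸ H.tendsto_R, by
    filter_upwards [Ico_mem_nhdsLT zero_lt_one] with t ht using H.R_pos ht⟩
  refine (tendsto_const_mul_atTop_of_pos (ε_pos_of_R_one_eq_zero h₁)).1 ?_
  refine (tendsto_atTop_add_const_right _ (-H.c⁻¹) hR.inv_tendsto_nhdsGT_zero).congr' ?_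
  filter_upwards [Ico_mem_nhdsLT zero_lt_one] with t ht
  rw [Pi.inv_apply, inv_R_eq ht, integ]
  ring

theorem tendsto_R_mul_integ_id_mul_weight :
    Tendsto (fun t => H.R t * H.integ (fun s => s * H.weight s) t) (𝓝[<] 1) (𝓝 1) := by
  have hlim : Tendsto (fun t => 1 - H.R t * H.c⁻¹) (𝓝[<] 1) (𝓝 1) := by
    simpa only [h₁, zero_mul, sub_zero] using (H.tendsto_R.mul_const H.c⁻¹).const_sub 1
  refine hlim.congr' ?_
  filter_upwards [Ico_mem_nhdsLT zero_lt_one] with t ht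
  rw [← sub_eq_iff_eq_add'.2 (inv_R_eq ht), mul_sub, mul_inv_cancel₀ (H.R_pos ht).ne']

open Asymptotics in
theorem isLittleO_integral_sub_mul_weight (hg : ContinuousOn g (Icc 0 1)) :
    (fun t => ∫ s in 0..t, (g s - s * g 1) * H.weight s ∂H.ν) =o[𝓝[<] 1]
      fun t => ∫ s in 0..t, s * H.weight s ∂H.ν := by
  have hint {u : ℝ → ℝ} (hu : ContinuousOn u (Icc 0 1)) (t : ℝ) (ht : t ∈ Ico (0 : ℝ) 1) :
      IntegrableOn (fun s => u s * H.weight s) (Ioc 0 t) H.ν :=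
    integrableOn_mul_weight (H.R_pos ht) (hu.mono (Icc_subset_Icc_right ht.2.le))
  have hcont : ContinuousOn (fun s => g s - s * g 1) (Icc 0 1) := by fun_prop
  have hlim : Tendsto (fun s => g s - s * g 1) (𝓝[<] 1) (𝓝 0) := by
    simpa only [one_mul, sub_self] using tendsto_nhdsLT_of_continuousOn_Icc zero_lt_one hcont
  have hone : (fun _ => (1 : ℝ)) =O[𝓝[<] 1] fun s : ℝ => s :=
    ((isEquivalent_const_iff_tendsto one_ne_zero).2
      (tendsto_nhdsLT_of_continuousOn_Icc zero_lt_one continuousOn_id)).isBigO_symm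
  refine isLittleO_intervalIntegral_of_tendsto_atTop (hint hcont) (hint continuousOn_id)
    (fun s hs => mul_nonneg hs.1.le (weight_pos (H.R_pos ⟨hs.1.le, hs.2⟩)
      (right_mem_Ioc.2 hs.1)).le)
    ((((isLittleO_const_iff one_ne_zero).2 hlim).trans_isBigO hone).mul_isBigO (isBigO_refl _ _))
    (tendsto_integral_id_mul_weight_atTop h₁) zero_lt_one

open Asymptotics in
/-- L'Hôpital's rule for the quotient of `integ (g * weight)` by `1 / R`, whose densities have
the ratio `g s / s → g 1`. -/
theorem tendsto_R_mul_integ_of_R_one_eq_zero (hg : ContinuousOn g (Icc 0 1)) :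
    Tendsto (fun t => H.R t * H.integ (fun s => g s * H.weight s) t) (𝓝[<] 1) (𝓝 (g 1)) := by
  have hid := tendsto_R_mul_integ_id_mul_weight h₁
  have herr : Tendsto (fun t => H.R t * H.integ (fun s => (g s - s * g 1) * H.weight s) t)
      (𝓝[<] 1) (𝓝 0) :=
    ((isBigO_refl H.R _).mul_isLittleO
      ((isBigO_refl (fun _ => H.ε) _).mul_isLittleO
        (isLittleO_integral_sub_mul_weight h₁ hg))).tendsto_zero_of_tendsto hid
  have hsum := herr.add (hid.mul_const (g 1))
  rw [zero_add, one_mul] at hsum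
  refine hsum.congr' ?_
  filter_upwards [Ico_mem_nhdsLT zero_lt_one] with t ht
  have hint {u : ℝ → ℝ} (hu : ContinuousOn u (Icc 0 1)) :
      IntervalIntegrable (fun s => u s * H.weight s) H.ν 0 t :=
    (intervalIntegrable_iff_integrableOn_Ioc_of_le ht.1).2
      (integrableOn_mul_weight (H.R_pos ht) (hu.mono (Icc_subset_Icc_right ht.2.le)))
  have hsub : ∫ s in 0..t, (g s - s * g 1) * H.weight s ∂H.ν =
      (∫ s in 0..t, g s * H.weight s ∂H.ν) - (∫ s in 0..t, s * H.weight s ∂H.ν) * g 1 := by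
    rw [← intervalIntegral.integral_mul_const, ← intervalIntegral.integral_sub (hint hg)
      ((hint (continuousOn_id' _)).mul_const _)]
    simp only [sub_mul, mul_right_comm]
  simp only [integ, hsub]
  ring

end Degenerate

theorem exists_tendsto_R_mul_integ (hg : ContinuousOn g (Icc 0 1)) :
    ∃ L, Tendsto (fun t => H.R t * H.integ (fun s => g s * H.weight s) t) (𝓝[<] 1) (𝓝 L) := by
  rcases H.R_one_nonneg.eq_or_lt with h | h
  · exact ⟨g 1, tendsto_R_mul_integ_of_R_one_eq_zero h.symm hg⟩
  · exact ⟨_, (isPrimitiveOn_R_mul_integ h hg).tendsto_leftLim (right_mem_Ioc.2 zero_lt_one)⟩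

theorem memD_inv (hg : ContinuousOn g (Icc 0 1)) : H.memD (H.inv g) := by
  obtain ⟨L, hL⟩ := H.exists_tendsto_R_mul_integ hg
  refine ⟨continuousOn_inv (hg.mono Ico_subset_Icc_self), ⟨g 1 - 1 * L, ?_⟩, ⟨L, ?_⟩⟩
  · refine ((tendsto_nhdsLT_of_continuousOn_Icc zero_lt_one hg).sub
      ((tendsto_nhdsLT_of_continuousOn_Icc zero_lt_one continuousOn_id).mul hL)).congr' ?_
    filter_upwards [Ico_mem_nhdsLT zero_lt_one] with t ht
    have hR := (H.R_pos ht).ne'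
    rw [inv, id]
    field_simp
  · refine hL.congr' ?_
    filter_upwards [Ico_mem_nhdsLT zero_lt_one] with t ht
    exact (integ_inv (H.R_pos ht) ht.1 (hg.mono (Icc_subset_Icc_right ht.2.le))).symm

theorem memD.exists_tendsto_T (hf : H.memD f) : ∃ L, Tendsto (H.T f) (𝓝[<] 1) (𝓝 L) := by
  obtain ⟨-, ⟨A, hA⟩, ⟨B, hB⟩⟩ := hf
  exact ⟨_, hA.add ((tendsto_nhdsLT_of_continuousOn_Icc zero_lt_one continuousOn_id).mul hB)⟩

theorem integ_congr (h : EqOn f g (Ico 0 1)) : EqOn (H.integ f) (H.integ g) (Ico 0 1) :=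
  fun t ht => by
    rw [integ, integ, intervalIntegral.integral_congr fun s hs => ?_]
    rw [uIcc_of_le ht.1] at hs
    exact h ⟨hs.1, hs.2.trans_lt ht.2⟩

theorem T_congr (h : EqOn f g (Ico 0 1)) : EqOn (H.T f) (H.T g) (Ico 0 1) :=
  fun t ht => by rw [T, T, h ht, integ_congr h ht]

theorem eqOn_of_eqOn_T (hf : ContinuousOn f (Ico 0 1)) (hg : ContinuousOn g (Ico 0 1))
    (h : EqOn (H.T f) (H.T g) (Ico 0 1)) : EqOn f g (Ico 0 1) := fun t ht => by
  have hinteg : EqOn (fun s => H.T f s * H.weight s) (fun s => H.T g s * H.weight s) (Ico 0 1) :=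
    fun s hs => by simp only [h hs]
  rw [← inv_T hf ht, ← inv_T hg ht, inv, inv, h ht, integ_congr hinteg ht]

theorem memD.congr (hf : H.memD f) (h : EqOn f g (Ico 0 1)) : H.memD g := by
  obtain ⟨hcont, ⟨A, hA⟩, ⟨B, hB⟩⟩ := hf
  have hmem : Ico (0 : ℝ) 1 ∈ 𝓝[<] 1 := Ico_mem_nhdsLT zero_lt_one
  refine ⟨hcont.congr h.symm, ⟨A, hA.congr' ?_⟩, ⟨B, hB.congr' ?_⟩⟩
  · filter_upwards [hmem] with t ht using by rw [h ht]
  · filter_upwards [hmem] with t ht using integ_congr h ht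

end HalfPair

section Reflection

variable {f f₁ f₂ : ℝ → ℝ} {L : ℝ}

theorem neg_mem_Ioo_of_mem_Ico {t : ℝ} (ht : t ∈ Ico (0 : ℝ) 1) : -t ∈ Ioo (-1 : ℝ) 1 :=
  ⟨neg_lt_neg ht.2, (neg_nonpos.2 ht.1).trans_lt one_pos⟩

theorem Ico_zero_one_subset_Ioo : Ico (0 : ℝ) 1 ⊆ Ioo (-1) 1 :=
  fun _ ht => ⟨neg_one_lt_zero.trans_le ht.1, ht.2⟩

theorem forall_mem_Ioo_of_halves {p : ℝ → Prop} (hpos : ∀ t ∈ Ico (0 : ℝ) 1, p t)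
    (hneg : ∀ t ∈ Ico (0 : ℝ) 1, p (-t)) : ∀ t ∈ Ioo (-1 : ℝ) 1, p t := by
  intro t ht
  rcases le_total 0 t with h | h
  · exact hpos t ⟨h, ht.2⟩
  · simpa only [neg_neg] using hneg (-t) ⟨neg_nonneg.2 h, neg_lt.1 ht.1⟩

theorem continuousOn_Ioo_iff_halves : ContinuousOn f (Ioo (-1) 1) ↔
    ContinuousOn f (Ico 0 1) ∧ ContinuousOn (fun t => f (-t)) (Ico 0 1) := by
  refine ⟨fun h => ⟨h.mono Ico_zero_one_subset_Ioo,
    h.comp continuousOn_neg fun _ => neg_mem_Ioo_of_mem_Ico⟩, fun ⟨hpos, hneg⟩ => ?_⟩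
  have hneg' : ContinuousOn f (Ioc (-1) 0) := by
    simpa only [neg_neg, comp_def] using hneg.comp (continuousOn_neg (s := Ioc (-1) 0))
      fun t ht => ⟨neg_nonneg.2 ht.2, neg_lt.1 ht.1⟩
  intro t ht
  rcases lt_trichotomy t 0 with h | rfl | h
  · exact (hneg'.continuousAt (Ioc_mem_nhds ht.1 h)).continuousWithinAt
  · exact ((hneg' 0 (by simp)).union (hpos 0 (by simp))).mono fun s hs =>
      (le_total s 0).imp (fun h => ⟨hs.1, h⟩) fun h => ⟨h, hs.2⟩
  · exact (hpos.continuousAt (Ico_mem_nhds h ht.2)).continuousWithinAt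

theorem tendsto_nhdsGT_neg_one_iff :
    Tendsto f (𝓝[>] (-1)) (𝓝 L) ↔ Tendsto (fun t => f (-t)) (𝓝[<] 1) (𝓝 L) := by
  refine ⟨fun h => h.comp tendsto_neg_nhdsLT, fun h => ?_⟩
  have hneg : Tendsto (fun t : ℝ => -t) (𝓝[>] (-1)) (𝓝[<] 1) := by
    simpa only [neg_neg] using tendsto_neg_nhdsGT (a := (-1 : ℝ))
  simpa only [neg_neg, comp_def] using h.comp hneg

theorem exists_eqOn_halves (h₀ : f₁ 0 = f₂ 0) :
    ∃ f : ℝ → ℝ, EqOn f f₁ (Ico 0 1) ∧ EqOn (fun t => f (-t)) f₂ (Ico 0 1) := by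
  refine ⟨fun t => if 0 ≤ t then f₁ t else f₂ (-t), fun t ht => if_pos ht.1, fun t ht => ?_⟩
  rcases ht.1.eq_or_lt with rfl | h
  · simpa using h₀
  · simp [h]

theorem intervalIntegral_map_neg {μ : Measure ℝ} {t : ℝ} (ht : 0 ≤ t) :
    ∫ s in 0..t, f s ∂(μ.map Neg.neg) = ∫ s in Ico (-t) 0, f (-s) ∂μ := by
  have hneg : MeasurableEmbedding (Neg.neg : ℝ → ℝ) := (Homeomorph.neg ℝ).measurableEmbedding
  rw [intervalIntegral.integral_of_le ht, hneg.setIntegral_map f (Ioc 0 t)]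
  simp

end Reflection

namespace NormBV0

variable {P : NormBV0} {f : ℝ → ℝ}

/-- The total variation measure `|ν|`. -/
noncomputable def variation (P : NormBV0) : Measure ℝ := P.νp + P.νm

open Classical in
/-- The sign of the signed measure `ν`, meaningful when `ν` or `-ν` is nonnegative. -/
noncomputable def sign (P : NormBV0) : ℝ := if P.νm = 0 then 1 else -1

theorem variation_eq_zero_of_subset_compl {S : Set ℝ} (hS : S ⊆ (Ioo (-1) 1)ᶜ) :
    P.variation S = 0 := by
  rw [variation, Measure.add_apply, measure_mono_null hS P.supp_p,
    measure_mono_null hS P.supp_m, add_zero]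

namespace BVplus

variable (hP : P.BVplus)
include hP

theorem isFiniteMeasure_variation : IsFiniteMeasure P.variation := by
  refine ⟨?_⟩
  rw [← measure_add_measure_compl (measurableSet_Ioo (a := (-1 : ℝ)) (b := 1)),
    variation_eq_zero_of_subset_compl subset_rfl, add_zero]
  exact ENNReal.add_lt_top.2 ⟨hP.1.lt_top, hP.2.1.lt_top⟩

theorem integ_eq (S : Set ℝ) (f : ℝ → ℝ) :
    P.integ S f = P.sign * ∫ s in S, f s ∂P.variation := by
  rcases eq_or_ne P.νm 0 with hm | hm
  · simp [integ, sign, variation, hm]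
  · simp [integ, sign, variation, hm, hP.2.2.2.resolve_left hm]

theorem integ_Ioc_eq {t : ℝ} (ht : 0 ≤ t) (f : ℝ → ℝ) :
    P.integ (Ioc 0 t) f = P.sign * ∫ s in 0..t, f s ∂P.variation := by
  rw [hP.integ_eq, intervalIntegral.integral_of_le ht]

theorem integ_Ico_eq {t : ℝ} (ht : 0 ≤ t) (f : ℝ → ℝ) :
    P.integ (Ico (-t) 0) f = P.sign * ∫ s in 0..t, f (-s) ∂(P.variation.map Neg.neg) := by
  rw [hP.integ_eq, intervalIntegral_map_neg (f := fun s => f (-s)) ht]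
  simp only [neg_neg]

theorem R_eq {t : ℝ} (ht : t ∈ Ico (0 : ℝ) 1) :
    P.R t = P.R 0 - P.sign * ∫ s in 0..t, s ∂P.variation := by
  rw [← hP.integ_Ioc_eq ht.1 fun s => s]
  exact P.fund_pos t ht

theorem R_neg_eq {t : ℝ} (ht : t ∈ Ico (0 : ℝ) 1) :
    P.R (-t) = P.R 0 - P.sign * ∫ s in 0..t, s ∂(P.variation.map Neg.neg) := by
  have hint := hP.integ_Ico_eq ht.1 fun s => s
  rw [intervalIntegral.integral_neg, mul_neg] at hint
  rw [sub_eq_add_neg, ← hint]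
  exact P.fund_neg (-t) ⟨neg_lt_neg ht.2, neg_nonpos.2 ht.1⟩

/-- The restriction of a class `BV₊` pair to `[0, 1)`. -/
noncomputable def rightHalf : HalfPair where
  ν := P.variation
  ε := P.sign
  c := P.R 0
  finite := hP.isFiniteMeasure_variation
  null_one := variation_eq_zero_of_subset_compl (by simp)
  pos t ht := by
    rw [← hP.R_eq ht]
    exact hP.2.2.1 t (Ico_zero_one_subset_Ioo ht)

/-- The restriction of a class `BV₊` pair to `(-1, 0]`, reflected to `[0, 1)`. -/
noncomputable def leftHalf : HalfPair where
  ν := P.variation.map Neg.neg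
  ε := P.sign
  c := P.R 0
  finite := by
    have := hP.isFiniteMeasure_variation
    infer_instance
  null_one := by
    rw [Measure.map_apply measurable_neg (measurableSet_singleton 1)]
    exact variation_eq_zero_of_subset_compl (by simp)
  pos t ht := by
    rw [← hP.R_neg_eq ht]
    exact hP.2.2.1 (-t) (neg_mem_Ioo_of_mem_Ico ht)

theorem eqOn_T_rightHalf (f : ℝ → ℝ) : EqOn (P.T f) (hP.rightHalf.T f) (Ico 0 1) := by
  intro t ht
  simp only [HalfPair.T, HalfPair.R, HalfPair.integ, rightHalf]
  rw [← hP.R_eq ht, ← hP.integ_Ioc_eq ht.1, T]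
  rcases ht.1.eq_or_lt with rfl | h
  · simp
  · rw [if_pos h]

theorem eqOn_T_leftHalf (f : ℝ → ℝ) :
    EqOn (fun t => P.T f (-t)) (hP.leftHalf.T fun t => f (-t)) (Ico 0 1) := by
  intro t ht
  simp only [HalfPair.T, HalfPair.R, HalfPair.integ, leftHalf]
  rw [← hP.R_neg_eq ht, ← hP.integ_Ico_eq ht.1, T, if_neg (not_lt.2 (neg_nonpos.2 ht.1)), neg_mul,
    sub_neg_eq_add]

theorem memD_iff : P.memD f ↔ hP.rightHalf.memD f ∧ hP.leftHalf.memD fun t => f (-t) := by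
  have hmem : Ico (0 : ℝ) 1 ∈ 𝓝[<] 1 := Ico_mem_nhdsLT zero_lt_one
  have hR : (fun t => P.R t * f t) =ᶠ[𝓝[<] 1] fun t => hP.rightHalf.R t * f t := by
    filter_upwards [hmem] with t ht using by rw [hP.R_eq ht]; rfl
  have hR_neg : (fun t => P.R (-t) * f (-t)) =ᶠ[𝓝[<] 1] fun t => hP.leftHalf.R t * f (-t) := by
    filter_upwards [hmem] with t ht using by rw [hP.R_neg_eq ht]; rfl
  have hint : (fun t => P.integ (Ioc 0 t) f) =ᶠ[𝓝[<] 1] hP.rightHalf.integ f := by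
    filter_upwards [hmem] with t ht using hP.integ_Ioc_eq ht.1 f
  have hint_neg : (fun t => P.integ (Ico (-t) 0) f) =ᶠ[𝓝[<] 1]
      hP.leftHalf.integ fun t => f (-t) := by
    filter_upwards [hmem] with t ht using hP.integ_Ico_eq ht.1 f
  simp only [memD, HalfPair.memD, continuousOn_Ioo_iff_halves, tendsto_nhdsGT_neg_one_iff,
    tendsto_congr' hR, tendsto_congr' hR_neg, tendsto_congr' hint, tendsto_congr' hint_neg]
  tauto

theorem exists_continuousOn_Icc_eqOn_T (hf : P.memD f) :
    ∃ g : ℝ → ℝ, ContinuousOn g (Icc (-1) 1) ∧ EqOn g (P.T f) (Ioo (-1) 1) := by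
  obtain ⟨hright, hleft⟩ := hP.memD_iff.1 hf
  have hT := hP.eqOn_T_rightHalf f
  have hT_neg := hP.eqOn_T_leftHalf f
  obtain ⟨A, hA⟩ := hright.exists_tendsto_T
  obtain ⟨B, hB⟩ := hleft.exists_tendsto_T
  have hmem : Ico (0 : ℝ) 1 ∈ 𝓝[<] 1 := Ico_mem_nhdsLT zero_lt_one
  have hcont : ContinuousOn (P.T f) (Ioo (-1) 1) := continuousOn_Ioo_iff_halves.2
    ⟨(HalfPair.continuousOn_T hright.1).congr hT, (HalfPair.continuousOn_T hleft.1).congr hT_neg⟩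
  exact ⟨extendFrom (Ioo (-1) 1) (P.T f), continuousOn_Icc_extendFrom_Ioo hcont
      (tendsto_nhdsGT_neg_one_iff.2 (hB.congr' (hT_neg.symm.eventuallyEq_of_mem hmem)))
      (hA.congr' (hT.symm.eventuallyEq_of_mem hmem)),
    fun t ht => extendFrom_eq (subset_closure ht) (hcont t ht)⟩

theorem exists_memD_eqOn_T {g : ℝ → ℝ} (hg : ContinuousOn g (Icc (-1) 1)) :
    ∃ f, P.memD f ∧ EqOn (P.T f) g (Ioo (-1) 1) := by
  have hright : ContinuousOn g (Icc 0 1) := hg.mono (Icc_subset_Icc_left (by norm_num))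
  have hleft : ContinuousOn (fun t => g (-t)) (Icc 0 1) :=
    hg.comp continuousOn_neg fun t ht => ⟨neg_le_neg ht.2, by linarith [ht.1]⟩
  obtain ⟨f, hf, hf_neg⟩ := exists_eqOn_halves (f₁ := hP.rightHalf.inv g)
    (f₂ := hP.leftHalf.inv fun t => g (-t)) (by
      simp only [HalfPair.inv, HalfPair.R_zero, neg_zero, zero_mul]; rfl)
  refine ⟨f, hP.memD_iff.2 ⟨(HalfPair.memD_inv hright).congr hf.symm,
    (HalfPair.memD_inv hleft).congr hf_neg.symm⟩, forall_mem_Ioo_of_halves (fun t ht => ?_)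
      fun t ht => ?_⟩
  · rw [hP.eqOn_T_rightHalf f ht, HalfPair.T_congr hf ht,
      HalfPair.T_inv (hright.mono Ico_subset_Icc_self) ht]
  · exact (hP.eqOn_T_leftHalf f ht).trans ((HalfPair.T_congr hf_neg ht).trans
      (HalfPair.T_inv (hleft.mono Ico_subset_Icc_self) ht))

theorem eqOn_of_eqOn_T {f₁ f₂ : ℝ → ℝ} (h₁ : P.memD f₁) (h₂ : P.memD f₂)
    (h : EqOn (P.T f₁) (P.T f₂) (Ioo (-1) 1)) : EqOn f₁ f₂ (Ioo (-1) 1) := by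
  obtain ⟨hright₁, hleft₁⟩ := hP.memD_iff.1 h₁
  obtain ⟨hright₂, hleft₂⟩ := hP.memD_iff.1 h₂
  refine forall_mem_Ioo_of_halves
    (HalfPair.eqOn_of_eqOn_T (H := hP.rightHalf) hright₁.1 hright₂.1 fun t ht => ?_)
    (HalfPair.eqOn_of_eqOn_T (H := hP.leftHalf) hleft₁.1 hleft₂.1 fun t ht => ?_)
  · rw [← hP.eqOn_T_rightHalf f₁ ht, ← hP.eqOn_T_rightHalf f₂ ht, h (Ico_zero_one_subset_Ioo ht)]
  · exact (hP.eqOn_T_leftHalf f₁ ht).symm.trans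
      ((h (neg_mem_Ioo_of_mem_Ico ht)).trans (hP.eqOn_T_leftHalf f₂ ht))

end BVplus

end NormBV0

/-- If `(R,ν)` is of class `BV₊` on `(-1,1)`, then (a) for every
`f ∈ D_{R,ν}` the transform `T_{R,ν} f` extends continuously to `[-1,1]`, and (b) for
every continuous `g : [-1,1] → ℝ` there is exactly one `f ∈ D_{R,ν}` (up to its values on
`(-1,1)`) with `T_{R,ν} f = g` on `(-1,1)`. -/
theorem bv0_bijection_full (P : NormBV0) (hP : P.BVplus) :
    (∀ f : ℝ → ℝ, P.memD f → ∃ g : ℝ → ℝ, ContinuousOn g (Set.Icc (-1 : ℝ) 1) ∧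
      ∀ t ∈ Set.Ioo (-1 : ℝ) 1, g t = P.T f t) ∧
    (∀ g : ℝ → ℝ, ContinuousOn g (Set.Icc (-1 : ℝ) 1) →
      (∃ f : ℝ → ℝ, P.memD f ∧ ∀ t ∈ Set.Ioo (-1 : ℝ) 1, P.T f t = g t) ∧
      (∀ f₁ f₂ : ℝ → ℝ, P.memD f₁ → P.memD f₂ →
        (∀ t ∈ Set.Ioo (-1 : ℝ) 1, P.T f₁ t = g t) →
        (∀ t ∈ Set.Ioo (-1 : ℝ) 1, P.T f₂ t = g t) →
        ∀ t ∈ Set.Ioo (-1 : ℝ) 1, f₁ t = f₂ t)) := by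
  refine ⟨fun f hf => hP.exists_continuousOn_Icc_eqOn_T hf, fun g hg => ⟨?_, ?_⟩⟩
  · exact hP.exists_memD_eqOn_T hg
  · intro f₁ f₂ hf₁ hf₂ h₁ h₂
    exact hP.eqOn_of_eqOn_T hf₁ hf₂ fun t ht => (h₁ t ht).trans (h₂ t ht).symm
end

section
/- Let (R, ν) be a normalized BV₀ pair on (−1,1) of class BV₊ on I = (a₋, a₊). Define z : (−1,1) → I by z(t) = |a₋|·t for t ≤ 0 and z(t) = a₊·t for t ≥ 0, and let ν′ be the signed measure on (−1,1) given by ν′(B) = |a₋|·ν(z(B ∩ (−1,0))) + a₊·ν(z(B ∩ (0,1))) for Borel sets B ⊆ (−1,1). Then (R∘z, ν′) is a normalized BV₀ pair of class BV₊ on (−1,1); moreover, T_{R∘z, ν′}(f∘z)(t) = (T_{R,ν}f)(z(t)) for every continuous f : I → ℝ and every t ∈ (−1,1), and f ∈ D^I_{R,ν} if and only if f∘z ∈ D_{R∘z, ν′}. -/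
open MeasureTheory Set Filter Function Topology

/-- The pair `(R,ν)` is of class `BV₊` on the subinterval `I = (am, ap)`:
`|ν|((-1,1)) < ∞`, `R > 0` on `I`, and `ν` or `-ν` is nonnegative. -/
def NormBV0.BVplusOn (P : NormBV0) (am ap : ℝ) : Prop :=
  P.νp (Set.Ioo (-1 : ℝ) 1) ≠ ⊤ ∧ P.νm (Set.Ioo (-1 : ℝ) 1) ≠ ⊤ ∧
  (∀ t ∈ Set.Ioo am ap, 0 < P.R t) ∧ (P.νm = 0 ∨ P.νp = 0)

/-- The class `D^I_{R,ν}` of continuous functions on `I = (am, ap)` whose four boundary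
limits exist. -/
def NormBV0.memDI (P : NormBV0) (am ap : ℝ) (f : ℝ → ℝ) : Prop :=
  ContinuousOn f (Set.Ioo am ap) ∧
  (∃ L : ℝ, Tendsto (fun t => P.R t * f t) (𝓝[<] ap) (𝓝 L)) ∧
  (∃ L : ℝ, Tendsto (fun t => P.R t * f t) (𝓝[>] am) (𝓝 L)) ∧
  (∃ L : ℝ, Tendsto (fun t => P.integ (Set.Ioc 0 t) f) (𝓝[<] ap) (𝓝 L)) ∧
  (∃ L : ℝ, Tendsto (fun t => P.integ (Set.Ico t 0) f) (𝓝[>] am) (𝓝 L))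

/-- The dilation `z : (-1,1) → (am, ap)`. -/
noncomputable def zmap (am ap : ℝ) (t : ℝ) : ℝ := if t ≤ 0 then -am * t else ap * t

/-!
Off the origin `z` is linear on either side, with slope `z t / t`, and `ν′` is the pullback of `ν`
along `z` weighted by that slope. So `s dν′(s)` is the pullback of `s dν(s)`, which is all that the
relations between `R` and `ν` see, and in `T` the weight turns the outer factor `t` into `z t`.
-/

section General

theorem map_orderIso_nhdsLT {α β : Type*} [TopologicalSpace α] [PartialOrder α] [OrderTopology α]
    [TopologicalSpace β] [PartialOrder β] [OrderTopology β] (e : α ≃o β) (x : α) :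
    map e (𝓝[<] x) = 𝓝[<] e x := by
  rw [← e.image_Iio]
  exact e.toHomeomorph.isEmbedding.map_nhdsWithin_eq _ _

theorem map_orderIso_nhdsGT {α β : Type*} [TopologicalSpace α] [PartialOrder α] [OrderTopology α]
    [TopologicalSpace β] [PartialOrder β] [OrderTopology β] (e : α ≃o β) (x : α) :
    map e (𝓝[>] x) = 𝓝[>] e x :=
  map_orderIso_nhdsLT e.dual x

theorem exists_tendsto_const_mul_iff₀ {α G : Type*} [GroupWithZero G] [TopologicalSpace G]
    [ContinuousConstSMul G G] {l : Filter α} {g : α → G} {c : G} (hc : c ≠ 0) :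
    (∃ L, Tendsto (fun t => c * g t) l (𝓝 L)) ↔ ∃ L, Tendsto g l (𝓝 L) :=
  (mul_left_surjective₀ hc).exists.trans (exists_congr fun _ => tendsto_const_smul_iff₀ hc)

variable {X Y : Type*} [MeasurableSpace X] [MeasurableSpace Y]

theorem mutuallySingular_comap {e : X → Y} (he : MeasurableEmbedding e) {μ ν : Measure Y}
    (h : μ.MutuallySingular ν) : (μ.comap e).MutuallySingular (ν.comap e) := by
  refine ⟨e ⁻¹' h.nullSet, he.measurable h.measurableSet_nullSet, ?_, ?_⟩
  · rw [he.comap_apply]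
    exact measure_mono_null (image_preimage_subset _ _) h.measure_nullSet
  · rw [← preimage_compl, he.comap_apply]
    exact measure_mono_null (image_preimage_subset _ _) h.measure_compl_nullSet

theorem setIntegral_comap {E : Type*} [NormedAddCommGroup E] [NormedSpace ℝ E] {e : X → Y}
    (he : MeasurableEmbedding e) (μ : Measure Y) (s : Set X) (f : Y → E) :
    ∫ x in s, f (e x) ∂μ.comap e = ∫ y in e '' s, f y ∂μ := by
  rw [he.restrict_comap, ← he.integral_map, he.map_comap,
    Measure.restrict_restrict he.measurableSet_range, inter_eq_right.2 (image_subset_range e s)]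

theorem restrict_smul_restrict_add_smul_restrict (μ : Measure X) {s t u : Set X}
    (hu : MeasurableSet u) (hus : u ⊆ s) (hut : Disjoint u t) (a b : ENNReal) :
    (a • μ.restrict s + b • μ.restrict t).restrict u = a • μ.restrict u := by
  simp [Measure.restrict_restrict_of_subset hus, Measure.restrict_restrict hu, hut.inter_eq]

end General

variable {am ap : ℝ}

section Zmap

theorem zmap_of_nonpos {t : ℝ} (ht : t ≤ 0) : zmap am ap t = -am * t :=
  if_pos ht

theorem zmap_of_nonneg {t : ℝ} (ht : 0 ≤ t) : zmap am ap t = ap * t := by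
  obtain rfl | ht := ht.eq_or_lt
  · simp [zmap]
  · exact if_neg ht.not_ge

theorem zmap_zero : zmap am ap 0 = 0 := by
  simp [zmap]

theorem zmap_one : zmap am ap 1 = ap := by
  simp [zmap_of_nonneg]

theorem zmap_neg_one : zmap am ap (-1) = am := by
  simp [zmap_of_nonpos]

variable (ham : am < 0) (hap : 0 < ap)
include ham hap

theorem zmap_strictMono : StrictMono (zmap am ap) := by
  have on_nonpos : StrictMonoOn (zmap am ap) (Iic 0) :=
    ((strictMono_mul_left_of_pos (neg_pos.2 ham)).strictMonoOn _).congr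
      fun _ ht => (zmap_of_nonpos ht).symm
  have on_nonneg : StrictMonoOn (zmap am ap) (Ici 0) :=
    ((strictMono_mul_left_of_pos hap).strictMonoOn _).congr fun _ ht => (zmap_of_nonneg ht).symm
  exact on_nonpos.Iic_union_Ici on_nonneg

theorem zmap_surjective : Surjective (zmap am ap) := by
  intro y
  obtain hy | hy := le_total y 0
  · refine ⟨y / -am, ?_⟩
    rw [zmap_of_nonpos (div_nonpos_of_nonpos_of_nonneg hy (neg_pos.2 ham).le),
      mul_div_cancel₀ _ (neg_pos.2 ham).ne']
  · refine ⟨y / ap, ?_⟩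
    rw [zmap_of_nonneg (div_nonneg hy hap.le), mul_div_cancel₀ _ hap.ne']

/-- The dilation `z` as an order isomorphism. The formula for `z` makes sense on all of `ℝ`, so
the intervals `(-1, 1)` and `(am, ap)` need not be turned into subtypes. -/
noncomputable def zmapIso : ℝ ≃o ℝ :=
  (zmap_strictMono ham hap).orderIsoOfSurjective _ (zmap_surjective ham hap)

theorem continuous_zmap : Continuous (zmap am ap) :=
  (zmapIso ham hap).continuous

theorem measurableEmbedding_zmap : MeasurableEmbedding (zmap am ap) :=
  (zmapIso ham hap).toHomeomorph.measurableEmbedding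

theorem zmap_pos_iff {t : ℝ} : 0 < zmap am ap t ↔ 0 < t := by
  simpa only [zmap_zero] using (zmap_strictMono ham hap).lt_iff_lt (a := 0) (b := t)

theorem zmap_nonneg_iff {t : ℝ} : 0 ≤ zmap am ap t ↔ 0 ≤ t := by
  simpa only [zmap_zero] using (zmap_strictMono ham hap).le_iff_le (a := 0) (b := t)

theorem zmap_lt_iff {t : ℝ} : zmap am ap t < ap ↔ t < 1 := by
  rw [← (zmap_strictMono ham hap).lt_iff_lt (b := 1), zmap_one]

theorem lt_zmap_iff {t : ℝ} : am < zmap am ap t ↔ -1 < t := by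
  rw [← (zmap_strictMono ham hap).lt_iff_lt (a := -1), zmap_neg_one]

theorem zmap_image_Ioc_zero (t : ℝ) : zmap am ap '' Ioc 0 t = Ioc 0 (zmap am ap t) :=
  ((zmapIso ham hap).image_Ioc 0 t).trans (congrArg (Ioc · _) zmap_zero)

theorem zmap_image_Ico_zero (t : ℝ) : zmap am ap '' Ico t 0 = Ico (zmap am ap t) 0 :=
  ((zmapIso ham hap).image_Ico t 0).trans (congrArg (Ico _ ·) zmap_zero)

theorem zmap_image_Ioo : zmap am ap '' Ioo (-1) 1 = Ioo am ap := by
  have h : zmap am ap '' Ioo (-1) 1 = Ioo (zmap am ap (-1)) (zmap am ap 1) :=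
    (zmapIso ham hap).image_Ioo (-1) 1
  rwa [zmap_neg_one, zmap_one] at h

theorem continuousOn_comp_zmap_iff {E : Type*} [TopologicalSpace E] {f : ℝ → E} :
    ContinuousOn (fun t => f (zmap am ap t)) (Ioo (-1) 1) ↔ ContinuousOn f (Ioo am ap) := by
  rw [← zmap_image_Ioo ham hap]
  exact (zmapIso ham hap).toHomeomorph.isInducing.continuousOn_image_iff.symm

theorem tendsto_comp_zmap_nhdsLT_one_iff {α : Type*} {g : ℝ → α} {l : Filter α} :
    Tendsto (fun t => g (zmap am ap t)) (𝓝[<] 1) l ↔ Tendsto g (𝓝[<] ap) l := by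
  have map_eq : map (zmap am ap) (𝓝[<] 1) = 𝓝[<] ap :=
    (map_orderIso_nhdsLT (zmapIso ham hap) 1).trans (congrArg (𝓝[<] ·) zmap_one)
  rw [← map_eq, tendsto_map'_iff, comp_def]

theorem tendsto_comp_zmap_nhdsGT_neg_one_iff {α : Type*} {g : ℝ → α} {l : Filter α} :
    Tendsto (fun t => g (zmap am ap t)) (𝓝[>] (-1)) l ↔ Tendsto g (𝓝[>] am) l := by
  have map_eq : map (zmap am ap) (𝓝[>] (-1)) = 𝓝[>] am :=
    (map_orderIso_nhdsGT (zmapIso ham hap) (-1)).trans (congrArg (𝓝[>] ·) zmap_neg_one)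
  rw [← map_eq, tendsto_map'_iff, comp_def]

end Zmap

section Dilate

/-- The measure `ν′` on `(-1, 1)`, for a positive measure `ν`. It is extended by zero to `ℝ`, and
the pullback along `z` is `Measure.comap`, whose value on `B` is `ν (z '' B)`. -/
noncomputable def dilate (am ap : ℝ) (μ : Measure ℝ) : Measure ℝ :=
  ENNReal.ofReal |am| • (μ.comap (zmap am ap)).restrict (Ioo (-1) 0) +
    ENNReal.ofReal ap • (μ.comap (zmap am ap)).restrict (Ioo 0 1)

theorem dilate_zero : dilate am ap 0 = 0 := by
  simp [dilate]

theorem dilate_le_smul_comap (μ : Measure ℝ) :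
    dilate am ap μ ≤ (ENNReal.ofReal |am| + ENNReal.ofReal ap) • μ.comap (zmap am ap) := by
  rw [dilate, add_smul]
  gcongr <;> exact Measure.restrict_le_self

variable (ham : am < 0) (hap : 0 < ap)
include ham hap

theorem dilate_apply (μ : Measure ℝ) {B : Set ℝ} (hB : MeasurableSet B) :
    dilate am ap μ B = ENNReal.ofReal |am| * μ (zmap am ap '' (B ∩ Ioo (-1) 0)) +
      ENNReal.ofReal ap * μ (zmap am ap '' (B ∩ Ioo 0 1)) := by
  simp [dilate, Measure.restrict_apply hB, (measurableEmbedding_zmap ham hap).comap_apply]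

theorem dilate_eq_zero_of_disjoint (μ : Measure ℝ) {B : Set ℝ} (hB : MeasurableSet B)
    (hneg : Disjoint B (Ioo (-1) 0)) (hpos : Disjoint B (Ioo 0 1)) : dilate am ap μ B = 0 := by
  simp [dilate_apply ham hap μ hB, hneg.inter_eq, hpos.inter_eq]

theorem dilate_singleton_zero (μ : Measure ℝ) : dilate am ap μ {0} = 0 :=
  dilate_eq_zero_of_disjoint ham hap μ (measurableSet_singleton 0) (by simp) (by simp)

theorem dilate_compl_Ioo (μ : Measure ℝ) : dilate am ap μ (Ioo (-1) 1)ᶜ = 0 :=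
  dilate_eq_zero_of_disjoint ham hap μ measurableSet_Ioo.compl
    (disjoint_compl_left_iff_subset.2 (Ioo_subset_Ioo_right zero_le_one))
    (disjoint_compl_left_iff_subset.2 (Ioo_subset_Ioo_left (neg_nonpos.2 zero_le_one)))

theorem dilate_ne_top {μ : Measure ℝ} {B : Set ℝ} (h : μ (zmap am ap '' B) ≠ ⊤) :
    dilate am ap μ B ≠ ⊤ := by
  refine ne_top_of_le_ne_top ?_ (dilate_le_smul_comap μ B)
  rw [Measure.smul_apply, (measurableEmbedding_zmap ham hap).comap_apply, smul_eq_mul]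
  exact ENNReal.mul_ne_top (by simp) h

theorem dilate_ne_top_of_isCompact (ham' : -1 ≤ am) (hap' : ap ≤ 1) {μ : Measure ℝ}
    (hμ : ∀ K : Set ℝ, IsCompact K → K ⊆ Ioo (-1) 1 → μ K ≠ ⊤) {K : Set ℝ} (hK : IsCompact K)
    (hKI : K ⊆ Ioo (-1) 1) : dilate am ap μ K ≠ ⊤ :=
  dilate_ne_top ham hap (hμ _ (hK.image (continuous_zmap ham hap))
    ((image_mono hKI).trans ((zmap_image_Ioo ham hap).trans_subset (Ioo_subset_Ioo ham' hap'))))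

theorem dilate_mutuallySingular {μ ν : Measure ℝ} (h : μ.MutuallySingular ν) :
    (dilate am ap μ).MutuallySingular (dilate am ap ν) :=
  (mutuallySingular_comap (measurableEmbedding_zmap ham hap) h).mono_ac
    (Measure.absolutelyContinuous_of_le_smul (dilate_le_smul_comap μ))
    (Measure.absolutelyContinuous_of_le_smul (dilate_le_smul_comap ν))

theorem setIntegral_Ioc_dilate {E : Type*} [NormedAddCommGroup E] [NormedSpace ℝ E]
    (μ : Measure ℝ) (f : ℝ → E) {t : ℝ} (ht : t < 1) :
    ∫ s in Ioc 0 t, f (zmap am ap s) ∂dilate am ap μ =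
      ap • ∫ s in Ioc 0 (zmap am ap t), f s ∂μ := by
  have subset_pos : Ioc 0 t ⊆ Ioo 0 1 := fun _ hs => ⟨hs.1, hs.2.trans_lt ht⟩
  have disjoint_neg : Disjoint (Ioc 0 t) (Ioo (-1) 0) :=
    disjoint_left.2 fun _ hs hs' => hs.1.not_gt hs'.2
  rw [dilate, add_comm, restrict_smul_restrict_add_smul_restrict _ measurableSet_Ioc
      subset_pos disjoint_neg,
    integral_smul_measure, setIntegral_comap (measurableEmbedding_zmap ham hap),
    zmap_image_Ioc_zero ham hap, ENNReal.toReal_ofReal hap.le]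

theorem setIntegral_Ico_dilate {E : Type*} [NormedAddCommGroup E] [NormedSpace ℝ E]
    (μ : Measure ℝ) (f : ℝ → E) {t : ℝ} (ht : -1 < t) :
    ∫ s in Ico t 0, f (zmap am ap s) ∂dilate am ap μ =
      -am • ∫ s in Ico (zmap am ap t) 0, f s ∂μ := by
  have subset_neg : Ico t 0 ⊆ Ioo (-1) 0 := fun _ hs => ⟨ht.trans_le hs.1, hs.2⟩
  have disjoint_pos : Disjoint (Ico t 0) (Ioo 0 1) :=
    disjoint_left.2 fun _ hs hs' => hs.2.not_gt hs'.1
  rw [dilate, restrict_smul_restrict_add_smul_restrict _ measurableSet_Ico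
      subset_neg disjoint_pos,
    integral_smul_measure, setIntegral_comap (measurableEmbedding_zmap ham hap),
    zmap_image_Ico_zero ham hap, ENNReal.toReal_ofReal (abs_nonneg am), abs_of_neg ham]

theorem setIntegral_id_Ioc_dilate (μ : Measure ℝ) {t : ℝ} (ht : t < 1) :
    ∫ s in Ioc 0 t, s ∂dilate am ap μ = ∫ s in Ioc 0 (zmap am ap t), s ∂μ := by
  refine mul_left_cancel₀ hap.ne' ?_
  calc ap * ∫ s in Ioc 0 t, s ∂dilate am ap μ
      = ∫ s in Ioc 0 t, zmap am ap s ∂dilate am ap μ := by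
        rw [← integral_const_mul]
        exact setIntegral_congr_fun measurableSet_Ioc fun s hs => (zmap_of_nonneg hs.1.le).symm
    _ = ap * ∫ s in Ioc 0 (zmap am ap t), s ∂μ := setIntegral_Ioc_dilate ham hap μ (fun s => s) ht

theorem setIntegral_id_Ico_dilate (μ : Measure ℝ) {t : ℝ} (ht : -1 < t) :
    ∫ s in Ico t 0, s ∂dilate am ap μ = ∫ s in Ico (zmap am ap t) 0, s ∂μ := by
  refine mul_left_cancel₀ (neg_pos.2 ham).ne' ?_
  calc -am * ∫ s in Ico t 0, s ∂dilate am ap μ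
      = ∫ s in Ico t 0, zmap am ap s ∂dilate am ap μ := by
        rw [← integral_const_mul]
        exact setIntegral_congr_fun measurableSet_Ico fun s hs => (zmap_of_nonpos hs.2.le).symm
    _ = -am * ∫ s in Ico (zmap am ap t) 0, s ∂μ := setIntegral_Ico_dilate ham hap μ (fun s => s) ht

end Dilate

namespace NormBV0

variable (P : NormBV0) (ham' : -1 ≤ am) (ham : am < 0) (hap : 0 < ap) (hap' : ap ≤ 1)

/-- The pair `(R ∘ z, ν′)`. -/
noncomputable def dilation : NormBV0 where
  R t := P.R (zmap am ap t)
  νp := dilate am ap P.νp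
  νm := dilate am ap P.νm
  sing := dilate_mutuallySingular ham hap P.sing
  supp_p := dilate_compl_Ioo ham hap P.νp
  supp_m := dilate_compl_Ioo ham hap P.νm
  locfin_p _ := dilate_ne_top_of_isCompact ham hap ham' hap' P.locfin_p
  locfin_m _ := dilate_ne_top_of_isCompact ham hap ham' hap' P.locfin_m
  zero_p := dilate_singleton_zero ham hap P.νp
  zero_m := dilate_singleton_zero ham hap P.νm
  fund_pos t ht := by
    have hz : zmap am ap t ∈ Ico 0 1 :=
      ⟨(zmap_nonneg_iff ham hap).2 ht.1, ((zmap_lt_iff ham hap).2 ht.2).trans_le hap'⟩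
    rw [zmap_zero, setIntegral_id_Ioc_dilate ham hap _ ht.2,
      setIntegral_id_Ioc_dilate ham hap _ ht.2, P.fund_pos _ hz]
  fund_neg t ht := by
    have hz : zmap am ap t ∈ Ioc (-1) 0 :=
      ⟨ham'.trans_lt ((lt_zmap_iff ham hap).2 ht.1),
        not_lt.1 (mt (zmap_pos_iff ham hap).1 ht.2.not_gt)⟩
    rw [zmap_zero, setIntegral_id_Ico_dilate ham hap _ ht.1,
      setIntegral_id_Ico_dilate ham hap _ ht.1, P.fund_neg _ hz]

theorem R_dilation (t : ℝ) : (P.dilation ham' ham hap hap').R t = P.R (zmap am ap t) :=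
  rfl

theorem integ_Ioc_dilation (f : ℝ → ℝ) {t : ℝ} (ht : t < 1) :
    (P.dilation ham' ham hap hap').integ (Ioc 0 t) (fun s => f (zmap am ap s)) =
      ap * P.integ (Ioc 0 (zmap am ap t)) f := by
  simp only [integ, dilation, setIntegral_Ioc_dilate ham hap _ f ht, smul_eq_mul, mul_sub]

theorem integ_Ico_dilation (f : ℝ → ℝ) {t : ℝ} (ht : -1 < t) :
    (P.dilation ham' ham hap hap').integ (Ico t 0) (fun s => f (zmap am ap s)) =
      -am * P.integ (Ico (zmap am ap t) 0) f := by
  simp only [integ, dilation, setIntegral_Ico_dilate ham hap _ f ht, smul_eq_mul, mul_sub]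

theorem T_dilation (f : ℝ → ℝ) {t : ℝ} (ht : t ∈ Ioo (-1) 1) :
    (P.dilation ham' ham hap hap').T (fun s => f (zmap am ap s)) t = P.T f (zmap am ap t) := by
  simp only [T, zmap_pos_iff ham hap, R_dilation, integ_Ioc_dilation P ham' ham hap hap' f ht.2,
    integ_Ico_dilation P ham' ham hap hap' f ht.1]
  split_ifs with h
  · linear_combination
      -P.integ (Ioc 0 (zmap am ap t)) f * zmap_of_nonneg (am := am) (ap := ap) h.le
  · linear_combination
      P.integ (Ico (zmap am ap t) 0) f * zmap_of_nonpos (am := am) (ap := ap) (not_lt.1 h)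

theorem exists_tendsto_integ_Ioc_dilation_iff (f : ℝ → ℝ) :
    (∃ L, Tendsto (fun t => (P.dilation ham' ham hap hap').integ (Ioc 0 t)
      (fun s => f (zmap am ap s))) (𝓝[<] 1) (𝓝 L)) ↔
    ∃ L, Tendsto (fun t => P.integ (Ioc 0 t) f) (𝓝[<] ap) (𝓝 L) := by
  refine Iff.trans (exists_congr fun L => ?_) (exists_tendsto_const_mul_iff₀ hap.ne')
  rw [← tendsto_comp_zmap_nhdsLT_one_iff ham hap]
  exact tendsto_congr' (eventually_mem_nhdsWithin.mono fun t ht =>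
    integ_Ioc_dilation P ham' ham hap hap' f ht)

theorem exists_tendsto_integ_Ico_dilation_iff (f : ℝ → ℝ) :
    (∃ L, Tendsto (fun t => (P.dilation ham' ham hap hap').integ (Ico t 0)
      (fun s => f (zmap am ap s))) (𝓝[>] (-1)) (𝓝 L)) ↔
    ∃ L, Tendsto (fun t => P.integ (Ico t 0) f) (𝓝[>] am) (𝓝 L) := by
  refine Iff.trans (exists_congr fun L => ?_) (exists_tendsto_const_mul_iff₀ (neg_pos.2 ham).ne')
  rw [← tendsto_comp_zmap_nhdsGT_neg_one_iff ham hap]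
  exact tendsto_congr' (eventually_mem_nhdsWithin.mono fun t ht =>
    integ_Ico_dilation P ham' ham hap hap' f ht)

theorem memD_dilation_iff (f : ℝ → ℝ) :
    (P.dilation ham' ham hap hap').memD (fun s => f (zmap am ap s)) ↔ P.memDI am ap f :=
  and_congr (continuousOn_comp_zmap_iff ham hap) <|
    and_congr (exists_congr fun _ =>
      tendsto_comp_zmap_nhdsLT_one_iff ham hap (g := fun t => P.R t * f t)) <|
    and_congr (exists_congr fun _ =>
      tendsto_comp_zmap_nhdsGT_neg_one_iff ham hap (g := fun t => P.R t * f t)) <|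
    and_congr (exists_tendsto_integ_Ioc_dilation_iff P ham' ham hap hap' f)
      (exists_tendsto_integ_Ico_dilation_iff P ham' ham hap hap' f)

variable {P} in
theorem BVplusOn.dilation (h : P.BVplusOn am ap) : (P.dilation ham' ham hap hap').BVplus := by
  obtain ⟨hp, hm, hR, hsign⟩ := h
  have image_subset : zmap am ap '' Ioo (-1) 1 ⊆ Ioo (-1) 1 :=
    (zmap_image_Ioo ham hap).trans_subset (Ioo_subset_Ioo ham' hap')
  refine ⟨dilate_ne_top ham hap (measure_ne_top_of_subset image_subset hp),
    dilate_ne_top ham hap (measure_ne_top_of_subset image_subset hm),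
    fun t ht => hR _ (zmap_image_Ioo ham hap ▸ mem_image_of_mem _ ht), hsign.imp ?_ ?_⟩ <;>
  exact fun h0 => (congrArg (dilate am ap) h0).trans dilate_zero

end NormBV0

theorem bv0_dilation_general (P : NormBV0) (am ap : ℝ)
    (h1 : -1 ≤ am) (h2 : am < 0) (h3 : 0 < ap) (h4 : ap ≤ 1) :
    ∃ Q : NormBV0,
      (∀ t : ℝ, Q.R t = P.R (zmap am ap t)) ∧
      (∀ B : Set ℝ, MeasurableSet B →
        Q.νp B = ENNReal.ofReal |am| * P.νp (zmap am ap '' (B ∩ Ioo (-1) 0)) +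
            ENNReal.ofReal ap * P.νp (zmap am ap '' (B ∩ Ioo 0 1)) ∧
        Q.νm B = ENNReal.ofReal |am| * P.νm (zmap am ap '' (B ∩ Ioo (-1) 0)) +
            ENNReal.ofReal ap * P.νm (zmap am ap '' (B ∩ Ioo 0 1))) ∧
      (P.BVplusOn am ap → Q.BVplus) ∧
      (∀ f : ℝ → ℝ,
        (∀ t ∈ Ioo (-1) 1, Q.T (fun s => f (zmap am ap s)) t = P.T f (zmap am ap t)) ∧
        (P.memDI am ap f ↔ Q.memD (fun s => f (zmap am ap s)))) :=
  ⟨P.dilation h1 h2 h3 h4, P.R_dilation h1 h2 h3 h4,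
    fun _ hB => ⟨dilate_apply h2 h3 P.νp hB, dilate_apply h2 h3 P.νm hB⟩,
    fun hBV => hBV.dilation h1 h2 h3 h4,
    fun f => ⟨fun _ => P.T_dilation h1 h2 h3 h4 f, (P.memD_dilation_iff h1 h2 h3 h4 f).symm⟩⟩

/-- Transferring a `BV₊` pair on `I = (a₋, a₊)` to a `BV₊` pair on
`(-1,1)` via the dilation `z`: the pair `(R∘z, ν′)` with
`ν′(B) = |a₋|·ν(z(B ∩ (-1,0))) + a₊·ν(z(B ∩ (0,1)))` is a normalized BV₀ pair of class
`BV₊` on `(-1,1)`, satisfies `T_{R∘z,ν′}(f∘z) = (T_{R,ν}f)∘z`, and `f ∈ D^I_{R,ν}` iff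
`f∘z ∈ D_{R∘z,ν′}`. -/
theorem bv0_dilation (P : NormBV0) (am ap : ℝ)
    (h1 : -1 ≤ am) (h2 : am < 0) (h3 : 0 < ap) (h4 : ap ≤ 1)
    (hBV : P.BVplusOn am ap) :
    ∃ Q : NormBV0,
      (∀ t : ℝ, Q.R t = P.R (zmap am ap t)) ∧
      (∀ B : Set ℝ, MeasurableSet B →
        Q.νp B = ENNReal.ofReal |am| * P.νp (zmap am ap '' (B ∩ Set.Ioo (-1 : ℝ) 0)) +
            ENNReal.ofReal ap * P.νp (zmap am ap '' (B ∩ Set.Ioo (0 : ℝ) 1)) ∧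
        Q.νm B = ENNReal.ofReal |am| * P.νm (zmap am ap '' (B ∩ Set.Ioo (-1 : ℝ) 0)) +
            ENNReal.ofReal ap * P.νm (zmap am ap '' (B ∩ Set.Ioo (0 : ℝ) 1))) ∧
      Q.BVplus ∧
      (∀ f : ℝ → ℝ, ContinuousOn f (Set.Ioo am ap) →
        (∀ t ∈ Set.Ioo (-1 : ℝ) 1, Q.T (fun s => f (zmap am ap s)) t = P.T f (zmap am ap t)) ∧
        (P.memDI am ap f ↔ Q.memD (fun s => f (zmap am ap s)))) := by
  obtain ⟨Q, hR, hν, hplus, hf⟩ := bv0_dilation_general P am ap h1 h2 h3 h4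
  exact ⟨Q, hR, hν, hplus hBV, fun f _ => hf f⟩
end
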